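/- arXiv:2103.15372 — 2 statements merged into one kernel-verified Lean document; each statement's English description precedes it below -/
import Mathlib

section
/- Let κ ∈ (0, 2π) and D = D^(κ). Let σ > 0, α + γ > −2, γ > −1 and β, ν ∈ ℝ. Then there exists a constant N = N(κ, α, β, γ, ν, σ) > 0 such that for every x ∈ D^(κ), ∫_{D^(κ)} |y|^α (|y| + 1)^{−β} ρ(y)^γ (ρ(y) + 1)^{−ν} e^{−σ |x − y|²} dy ≤ N (|x| + 1)^{α−β} (ρ(x) + 1)^{γ−ν}. (This is the two-dimensional case of an integral estimate on conic domains.) -/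
open MeasureTheory

/-- The planar angular (conic) domain
`D^(κ) = {(r cos η, r sin η) : r > 0, −κ/2 < η < κ/2} ⊆ ℝ²`. -/
def wedge (κ : ℝ) : Set (EuclideanSpace ℝ (Fin 2)) :=
  {x | ∃ r η : ℝ, 0 < r ∧ -(κ / 2) < η ∧ η < κ / 2 ∧
        x 0 = r * Real.cos η ∧ x 1 = r * Real.sin η}

/-- `ρ(x) = dist(x, ∂D^(κ))`, the distance to the boundary of the wedge. -/
noncomputable def wedgeDist (κ : ℝ) (x : EuclideanSpace ℝ (Fin 2)) : ℝ :=
  Metric.infDist x (frontier (wedge κ))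

/-!
The weights `|y| + 1` and `ρ(y) + 1` are 1-Lipschitz and at least 1, so replacing `y` by `x` in any
power of them costs at most a factor `exp (A |x - y|)`, which half of the Gaussian absorbs. What
remains is to bound, uniformly in `x`, the Gaussian integral of the singular factor
`(1 + |y|⁻¹) ^ a * (1 + ρ(y)⁻¹) ^ c`, where `c = γ⁻` and, because `ρ(y) ≤ |y|`, one may take
`a = (α + γ⁺)⁻`; then `c < 1` and `a + c` is less than the dimension. The boundary lies in finitely
many proper subspaces, so `ρ(y)` is at least the modulus of the coordinate of `y` along a unit
vector normal to one of them. Complete that vector to an orthonormal basis and distribute the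
exponent `a` over all coordinates: the singular factor is dominated by a product of one-variable
singularities, each of order less than 1, and Tonelli's theorem reduces the bound to the line.
-/

open Module
open scoped ENNReal RealInnerProductSpace

/-- The unnormalised Gaussian kernel `exp (-τ |x - y|²)`, valued in `ℝ≥0∞` so that it can be
multiplied by weights that are infinite on null sets. -/
noncomputable def gaussianKernel {E : Type*} [NormedAddCommGroup E] (τ : ℝ) (x y : E) : ℝ≥0∞ :=
  ENNReal.ofReal (Real.exp (-τ * ‖x - y‖ ^ 2))

section GaussianKernel

variable {E : Type*} [NormedAddCommGroup E] {τ : ℝ}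

@[fun_prop]
lemma measurable_gaussianKernel [MeasurableSpace E] [BorelSpace E] (τ : ℝ) (x : E) :
    Measurable (gaussianKernel τ x) := by
  unfold gaussianKernel
  fun_prop

lemma gaussianKernel_le_one (hτ : 0 ≤ τ) (x y : E) : gaussianKernel τ x y ≤ 1 := by
  rw [gaussianKernel, ENNReal.ofReal_le_one, Real.exp_le_one_iff, neg_mul, neg_nonpos]
  positivity

lemma lintegral_gaussianKernel_real (hτ : 0 < τ) (s : ℝ) :
    ∫⁻ t, gaussianKernel τ s t = ENNReal.ofReal √(Real.pi / τ) := by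
  rw [← integral_gaussian, ofReal_integral_eq_lintegral_ofReal (integrable_exp_neg_mul_sq hτ)
    (.of_forall fun t ↦ Real.exp_nonneg _),
    ← lintegral_sub_left_eq_self (fun t ↦ ENNReal.ofReal (Real.exp (-τ * t ^ 2))) s]
  simp only [gaussianKernel, Real.norm_eq_abs, sq_abs]

lemma gaussianKernel_eq_prod [InnerProductSpace ℝ E] {ι : Type*} [Fintype ι]
    (b : OrthonormalBasis ι ℝ E) (τ : ℝ) (x y : E) :
    gaussianKernel τ x y = ∏ i, gaussianKernel τ ⟪b i, x⟫ ⟪b i, y⟫ := by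
  have norm_sq : ‖x - y‖ ^ 2 = ∑ i, ‖⟪b i, x⟫ - ⟪b i, y⟫‖ ^ 2 := by
    simp_rw [← b.sum_sq_norm_inner_right (x - y), inner_sub_right]
  simp only [gaussianKernel]
  rw [norm_sq, Finset.mul_sum, Real.exp_sum,
    ENNReal.ofReal_prod_of_nonneg fun i _ ↦ (Real.exp_nonneg _)]

end GaussianKernel

/-! ### Singular Gaussian integrals on the line -/

lemma setLIntegral_ball_enorm_rpow_neg_ne_top {E : Type*} [NormedAddCommGroup E] [NormedSpace ℝ E]
    [FiniteDimensional ℝ E] [Nontrivial E] [MeasurableSpace E] [BorelSpace E] (μ : Measure E)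
    [μ.IsAddHaarMeasure] {p : ℝ} (hp : p < finrank ℝ E) (r : ℝ) :
    ∫⁻ y in Metric.ball 0 r, ‖y‖ₑ ^ (-p) ∂μ ≠ ∞ := by
  have integrableOn : IntegrableOn (fun y : E ↦ ‖y‖ ^ (-p)) (Metric.ball 0 r) μ :=
    integrableOn_ball_of_norm_le_rpow (C := 1) finrank_pos hp
      (.of_forall fun y ↦ by rw [one_mul, Real.norm_of_nonneg (by positivity)])
      (measurable_norm.pow_const _).aestronglyMeasurable
  have ae_ne_zero : ∀ᵐ y ∂μ.restrict (Metric.ball 0 r), y ≠ 0 :=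
    ae_restrict_of_ae (Measure.ae_ne μ 0)
  convert integrableOn.hasFiniteIntegral.ne using 1
  refine lintegral_congr_ae (ae_ne_zero.mono fun y hy ↦ ?_)
  simp only [Real.enorm_of_nonneg (Real.rpow_nonneg (norm_nonneg y) _)]
  rw [← ENNReal.ofReal_rpow_of_pos (norm_pos_iff.2 hy), ofReal_norm]

lemma one_add_inv_enorm_rpow_le {E : Type*} [NormedAddCommGroup E] {p : ℝ} (hp0 : 0 ≤ p)
    (hp1 : p ≤ 1) (y : E) :
    (1 + ‖y‖ₑ⁻¹) ^ p ≤ 2 + (Metric.ball 0 1).indicator (fun y ↦ ‖y‖ₑ ^ (-p)) y := by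
  have subadditive : (1 + ‖y‖ₑ⁻¹) ^ p ≤ 1 + ‖y‖ₑ ^ (-p) := by
    simpa [ENNReal.rpow_neg, ENNReal.inv_rpow] using
      ENNReal.rpow_add_le_add_rpow 1 ‖y‖ₑ⁻¹ hp0 hp1
  refine subadditive.trans ?_
  by_cases hy : y ∈ Metric.ball (0 : E) 1
  · rw [Set.indicator_of_mem hy]
    gcongr
    norm_num
  · have one_le : 1 ≤ ‖y‖ₑ := by
      simpa [← ofReal_norm] using hy
    rw [Set.indicator_of_notMem hy, add_zero, ← one_add_one_eq_two]
    gcongr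
    rw [ENNReal.rpow_neg, ENNReal.inv_le_one]
    simpa using ENNReal.rpow_le_rpow_of_exponent_le one_le hp0

lemma exists_lintegral_one_add_inv_enorm_rpow_mul_gaussianKernel_le {τ p : ℝ} (hτ : 0 < τ)
    (hp0 : 0 ≤ p) (hp1 : p < 1) :
    ∃ M ≠ ∞, ∀ s : ℝ, ∫⁻ t : ℝ, (1 + ‖t‖ₑ⁻¹) ^ p * gaussianKernel τ s t ≤ M := by
  refine ⟨2 * ENNReal.ofReal √(Real.pi / τ) + ∫⁻ t in Metric.ball (0 : ℝ) 1, ‖t‖ₑ ^ (-p), ?_,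
    fun s ↦ ?_⟩
  · have := setLIntegral_ball_enorm_rpow_neg_ne_top (volume : Measure ℝ) (p := p) (by simpa) 1
    finiteness
  rw [← lintegral_gaussianKernel_real hτ s, ← lintegral_const_mul _ (by fun_prop),
    ← lintegral_indicator Metric.isOpen_ball.measurableSet, ← lintegral_add_left (by fun_prop)]
  refine lintegral_mono fun t ↦ ?_
  calc (1 + ‖t‖ₑ⁻¹) ^ p * gaussianKernel τ s t
      ≤ (2 + (Metric.ball 0 1).indicator (fun t ↦ ‖t‖ₑ ^ (-p)) t) * gaussianKernel τ s t := by
        gcongr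
        exact one_add_inv_enorm_rpow_le hp0 hp1.le t
    _ ≤ 2 * gaussianKernel τ s t + (Metric.ball 0 1).indicator (fun t ↦ ‖t‖ₑ ^ (-p)) t := by
        rw [add_mul]
        gcongr
        exact mul_le_of_le_one_right' (gaussianKernel_le_one hτ.le s t)

/-! ### Distributing a singularity over the coordinates -/

lemma exists_sum_eq_and_add_single_lt_one {ι : Type*} [Fintype ι] [DecidableEq ι] (i₀ : ι) {a c : ℝ}
    (ha : 0 ≤ a) (hc : c < 1) (hac : a + c < Fintype.card ι) :
    ∃ q : ι → ℝ, (∀ i, 0 ≤ q i) ∧ ∑ i, q i = a ∧ ∀ i, q i + (Pi.single i₀ c : ι → ℝ) i < 1 := by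
  have room_pos : 0 < Fintype.card ι - c := by linarith
  have single_lt_one (i : ι) : (Pi.single i₀ c : ι → ℝ) i < 1 := by
    rcases eq_or_ne i i₀ with rfl | hi <;> simp [*]
  have ratio_lt_one : a / (Fintype.card ι - c) < 1 := by
    rw [div_lt_one room_pos]
    linarith
  -- The room left below 1, namely `1 - c` at `i₀` and `1` elsewhere, is filled proportionally.
  refine ⟨fun i ↦ a / (Fintype.card ι - c) * (1 - (Pi.single i₀ c : ι → ℝ) i),
    fun i ↦ ?_, ?_, fun i ↦ ?_⟩
  · have := single_lt_one i
    exact mul_nonneg (by positivity) (by linarith)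
  · rw [← Finset.mul_sum, Finset.sum_sub_distrib, Finset.sum_pi_single', if_pos (Finset.mem_univ _)]
    simp [div_mul_cancel₀ a room_pos.ne']
  · nlinarith [single_lt_one i]

lemma ennreal_rpow_sum_of_nonneg {ι : Type*} {s : Finset ι} {q : ι → ℝ}
    (hq : ∀ i ∈ s, 0 ≤ q i) (r : ℝ≥0∞) : r ^ (∑ i ∈ s, q i) = ∏ i ∈ s, r ^ q i := by
  induction s using Finset.cons_induction with
  | empty => simp
  | cons i s hi ih =>
    rw [Finset.forall_mem_cons] at hq
    rw [Finset.sum_cons, Finset.prod_cons, ← ih hq.2,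
      ENNReal.rpow_add_of_nonneg _ _ hq.1 (Finset.sum_nonneg hq.2)]

lemma rpow_mul_rpow_le_prod_rpow {ι : Type*} [Fintype ι] [DecidableEq ι] (i₀ : ι)
    {A B : ℝ≥0∞} {h : ι → ℝ≥0∞} (hA : ∀ i, A ≤ h i) (hB : B ≤ h i₀) {q : ι → ℝ} {c : ℝ}
    (hq : ∀ i, 0 ≤ q i) (hc : 0 ≤ c) :
    A ^ (∑ i, q i) * B ^ c ≤ ∏ i, h i ^ (q i + (Pi.single i₀ c : ι → ℝ) i) := by
  have single_nonneg : 0 ≤ (Pi.single i₀ c : ι → ℝ) := Pi.single_nonneg.2 hc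
  have rpow_c : h i₀ ^ c = ∏ i, h i ^ (Pi.single i₀ c : ι → ℝ) i := by
    rw [Finset.prod_eq_single_of_mem i₀ (Finset.mem_univ _) fun i _ hi ↦ by simp [hi],
      Pi.single_eq_same]
  calc A ^ (∑ i, q i) * B ^ c ≤ (∏ i, h i ^ q i) * h i₀ ^ c := by
        rw [ennreal_rpow_sum_of_nonneg fun i _ ↦ hq i]
        gcongr with i
        · exact hq i
        · exact hA i
    _ = ∏ i, h i ^ (q i + (Pi.single i₀ c : ι → ℝ) i) := by
        rw [rpow_c, ← Finset.prod_mul_distrib]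
        exact Finset.prod_congr rfl fun i _ ↦
          (ENNReal.rpow_add_of_nonneg _ _ (hq i) (single_nonneg i)).symm

/-! ### Singularities along subspaces -/

lemma lintegral_fin_prod_eq_prod {n : ℕ} {X : Type*} [MeasureSpace X]
    [SigmaFinite (volume : Measure X)] {f : Fin n → X → ℝ≥0∞} (hf : ∀ i, Measurable (f i)) :
    ∫⁻ x : Fin n → X, ∏ i, f i (x i) = ∏ i, ∫⁻ t, f i t := by
  induction n with
  | zero => simp [volume_pi]
  | succ n ih =>
    have tail_measurable : Measurable fun x : Fin n → X ↦ ∏ i, f i.succ (x i) := by fun_prop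
    have split := (volume_preserving_piFinSuccAbove (fun _ ↦ X) (0 : Fin (n + 1))).lintegral_comp
      (f := fun z ↦ f 0 z.1 * ∏ i : Fin n, f i.succ (z.2 i)) (by fun_prop)
    calc ∫⁻ x : Fin (n + 1) → X, ∏ i, f i (x i)
        = ∫⁻ z : X × (Fin n → X), f 0 z.1 * ∏ i : Fin n, f i.succ (z.2 i) := by
          rw [← split]
          simp [Fin.prod_univ_succ, Fin.tail]
      _ = (∫⁻ t, f 0 t) * ∏ i : Fin n, ∫⁻ t, f i.succ t := by
          rw [← ih fun i ↦ hf i.succ]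
          exact lintegral_prod_mul (hf 0).aemeasurable tail_measurable.aemeasurable
      _ = ∏ i, ∫⁻ t, f i t := (Fin.prod_univ_succ fun i ↦ ∫⁻ t, f i t).symm

section InnerProductSpace

variable {E : Type*} [NormedAddCommGroup E] [InnerProductSpace ℝ E]

lemma lintegral_prod_inner_eq_prod_lintegral [FiniteDimensional ℝ E] [MeasurableSpace E]
    [BorelSpace E] {n : ℕ} (b : OrthonormalBasis (Fin n) ℝ E) {f : Fin n → ℝ → ℝ≥0∞}
    (hf : ∀ i, Measurable (f i)) :
    ∫⁻ y, ∏ i, f i ⟪b i, y⟫ = ∏ i, ∫⁻ t, f i t := by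
  have coordinates := (EuclideanSpace.volume_preserving_symm_measurableEquiv_toLp (Fin n)).comp
    b.measurePreserving_repr
  rw [← lintegral_fin_prod_eq_prod hf, ← coordinates.lintegral_comp (by fun_prop)]
  simp [b.repr_apply_apply]

lemma exists_lintegral_prod_inner_mul_gaussianKernel_le [FiniteDimensional ℝ E] [MeasurableSpace E]
    [BorelSpace E] {n : ℕ} (b : OrthonormalBasis (Fin n) ℝ E) {τ : ℝ} (hτ : 0 < τ) {p : Fin n → ℝ}
    (hp0 : ∀ i, 0 ≤ p i) (hp1 : ∀ i, p i < 1) :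
    ∃ M ≠ ∞, ∀ x, ∫⁻ y, (∏ i, (1 + ‖⟪b i, y⟫‖ₑ⁻¹) ^ p i) * gaussianKernel τ x y ≤ M := by
  choose M M_ne_top lintegral_le using fun i ↦
    exists_lintegral_one_add_inv_enorm_rpow_mul_gaussianKernel_le hτ (hp0 i) (hp1 i)
  refine ⟨∏ i, M i, ENNReal.prod_ne_top fun i _ ↦ M_ne_top i, fun x ↦ ?_⟩
  simp_rw [gaussianKernel_eq_prod b, ← Finset.prod_mul_distrib]
  rw [lintegral_prod_inner_eq_prod_lintegral b
    (f := fun i t ↦ (1 + ‖t‖ₑ⁻¹) ^ p i * gaussianKernel τ ⟪b i, x⟫ t) (by fun_prop)]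
  exact Finset.prod_le_prod' fun i _ ↦ lintegral_le i _

lemma exists_orthonormalBasis_apply_mem_orthogonal [FiniteDimensional ℝ E] {V : Submodule ℝ E}
    (hV : V ≠ ⊤) :
    ∃ (b : OrthonormalBasis (Fin (finrank ℝ E)) ℝ E) (i : Fin (finrank ℝ E)), b i ∈ Vᗮ := by
  obtain ⟨v, hvV, hv⟩ := Submodule.exists_mem_ne_zero_of_ne_bot
    (mt Submodule.orthogonal_eq_bot_iff.1 hV)
  have : Nontrivial E := ⟨v, 0, hv⟩
  let i : Fin (finrank ℝ E) := ⟨0, finrank_pos⟩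
  have orthonormal : Orthonormal ℝ (Set.domRestrict {i} fun _ ↦ (‖v‖⁻¹ • v : E)) := by
    simpa [Set.domRestrict] using norm_smul_inv_norm (𝕜 := ℝ) hv
  obtain ⟨b, hb⟩ := orthonormal.exists_orthonormalBasis_extension_of_card_eq (by simp)
  exact ⟨b, i, hb i rfl ▸ Vᗮ.smul_mem _ hvV⟩

lemma enorm_inner_le_infEDist {V : Submodule ℝ E} {v : E} (hv : v ∈ Vᗮ) (norm_v : ‖v‖ = 1)
    (y : E) : ‖⟪v, y⟫‖ₑ ≤ Metric.infEDist y V := by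
  rw [Metric.le_infEDist]
  intro z hz
  have inner_z : ⟪v, z⟫ = 0 := Submodule.inner_left_of_mem_orthogonal hz hv
  rw [edist_eq_enorm_sub, enorm_le_iff_norm_le]
  calc ‖⟪v, y⟫‖ = ‖⟪v, y - z⟫‖ := by rw [inner_sub_right, inner_z, sub_zero]
    _ ≤ ‖v‖ * ‖y - z‖ := norm_inner_le_norm v (y - z)
    _ = ‖y - z‖ := by rw [norm_v, one_mul]

variable [FiniteDimensional ℝ E] [MeasurableSpace E] [BorelSpace E]

lemma exists_lintegral_infEDist_submodule_mul_gaussianKernel_le {V : Submodule ℝ E} (hV : V ≠ ⊤)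
    {τ a c : ℝ} (hτ : 0 < τ) (ha : 0 ≤ a) (hc0 : 0 ≤ c) (hc1 : c < 1)
    (hac : a + c < finrank ℝ E) :
    ∃ M ≠ ∞, ∀ x : E, ∫⁻ y : E, (1 + ‖y‖ₑ⁻¹) ^ a * (1 + (Metric.infEDist y (V : Set E))⁻¹) ^ c *
      gaussianKernel τ x y ≤ M := by
  obtain ⟨b, i₀, hb⟩ := exists_orthonormalBasis_apply_mem_orthogonal hV
  obtain ⟨q, q_nonneg, rfl, exponent_lt_one⟩ :=
    exists_sum_eq_and_add_single_lt_one i₀ ha hc1 (by rwa [Fintype.card_fin])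
  have single_nonneg : 0 ≤ (Pi.single i₀ c : Fin (finrank ℝ E) → ℝ) := Pi.single_nonneg.2 hc0
  obtain ⟨M, M_ne_top, lintegral_le⟩ := exists_lintegral_prod_inner_mul_gaussianKernel_le b hτ
    (fun i ↦ add_nonneg (q_nonneg i) (single_nonneg i)) exponent_lt_one
  refine ⟨M, M_ne_top, fun x ↦ (lintegral_mono fun y ↦ ?_).trans (lintegral_le x)⟩
  have enorm_inner_le (i) : ‖⟪b i, y⟫‖ₑ ≤ ‖y‖ₑ := by
    simpa [enorm_le_iff_norm_le] using norm_inner_le_norm (𝕜 := ℝ) (b i) y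
  gcongr
  refine rpow_mul_rpow_le_prod_rpow i₀ (fun i ↦ ?_) ?_ q_nonneg hc0
  · gcongr
    exact enorm_inner_le i
  · gcongr
    exact enorm_inner_le_infEDist hb (b.norm_eq_one i₀) y

lemma exists_lintegral_infEDist_mul_gaussianKernel_le_of_subset_iUnion {ι : Type*} [Finite ι]
    [Nonempty ι] {V : ι → Submodule ℝ E} (hV : ∀ i, V i ≠ ⊤) {F : Set E}
    (hF : F ⊆ ⋃ i, (V i : Set E)) {τ a c : ℝ} (hτ : 0 < τ) (ha : 0 ≤ a) (hc0 : 0 ≤ c)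
    (hc1 : c < 1) (hac : a + c < finrank ℝ E) :
    ∃ M ≠ ∞, ∀ x : E, ∫⁻ y : E, (1 + ‖y‖ₑ⁻¹) ^ a * (1 + (Metric.infEDist y F)⁻¹) ^ c *
      gaussianKernel τ x y ≤ M := by
  have := Fintype.ofFinite ι
  choose M M_ne_top lintegral_le using fun i ↦
    exists_lintegral_infEDist_submodule_mul_gaussianKernel_le (hV i) hτ ha hc0 hc1 hac
  refine ⟨∑ i, M i, ENNReal.sum_ne_top.2 fun i _ ↦ M_ne_top i, fun x ↦ ?_⟩
  refine le_trans ?_ (Finset.sum_le_sum fun i _ ↦ lintegral_le i x)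
  rw [← lintegral_finsetSum _ fun i _ ↦ by fun_prop]
  refine lintegral_mono fun y ↦ ?_
  obtain ⟨i, infEDist_min⟩ := Finite.exists_min fun i ↦ Metric.infEDist y (V i : Set E)
  have infEDist_le : Metric.infEDist y (V i : Set E) ≤ Metric.infEDist y F := by
    refine le_trans ?_ (Metric.infEDist_anti hF)
    rw [Metric.infEDist_iUnion]
    exact le_iInf infEDist_min
  calc (1 + ‖y‖ₑ⁻¹) ^ a * (1 + (Metric.infEDist y F)⁻¹) ^ c * gaussianKernel τ x y
      ≤ (1 + ‖y‖ₑ⁻¹) ^ a * (1 + (Metric.infEDist y (V i : Set E))⁻¹) ^ c *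
          gaussianKernel τ x y := by gcongr
    _ ≤ _ := Finset.single_le_sum_of_canonicallyOrdered (f := fun i ↦ (1 + ‖y‖ₑ⁻¹) ^ a *
        (1 + (Metric.infEDist y (V i : Set E))⁻¹) ^ c * gaussianKernel τ x y) (Finset.mem_univ i)

end InnerProductSpace

/-! ### Comparison of weights -/

-- Peetre's inequality, weakened by `1 + t ≤ exp t`.
lemma add_one_rpow_le_mul_exp {E : Type*} [SeminormedAddCommGroup E] {f : E → ℝ}
    (hf : LipschitzWith 1 f) (hf0 : ∀ y, 0 ≤ f y) (m : ℝ) (x y : E) :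
    (f y + 1) ^ m ≤ (f x + 1) ^ m * Real.exp (|m| * ‖x - y‖) := by
  have growth (y z : E) : f y + 1 ≤ (f z + 1) * Real.exp ‖z - y‖ := by
    have lipschitz : f y ≤ f z + ‖z - y‖ := by
      simpa [dist_eq_norm_sub'] using hf.le_add_mul y z
    nlinarith [Real.add_one_le_exp ‖z - y‖, hf0 z, norm_nonneg (z - y)]
  have pos (y : E) : 0 < f y + 1 := by linarith [hf0 y]
  rcases le_total 0 m with hm | hm
  · rw [abs_of_nonneg hm, mul_comm m, Real.exp_mul,
      ← Real.mul_rpow (pos x).le (Real.exp_nonneg _)]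
    exact Real.rpow_le_rpow (pos y).le (growth y x) hm
  · have exp_eq : Real.exp (|m| * ‖x - y‖) = Real.exp (-‖y - x‖) ^ m := by
      rw [← Real.exp_mul, abs_of_nonpos hm, norm_sub_rev, neg_mul_comm, mul_comm]
    rw [exp_eq, ← Real.mul_rpow (pos x).le (Real.exp_nonneg _)]
    refine Real.rpow_le_rpow_of_nonpos (mul_pos (pos x) (Real.exp_pos _)) ?_ hm
    rw [Real.exp_neg, ← div_eq_mul_inv, div_le_iff₀ (Real.exp_pos _)]
    exact growth x y

lemma exp_linear_mul_gaussian_le {σ : ℝ} (hσ : 0 < σ) (A t : ℝ) :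
    Real.exp (A * t) * Real.exp (-σ * t ^ 2) ≤
      Real.exp (A ^ 2 / (2 * σ)) * Real.exp (-(σ / 2) * t ^ 2) := by
  have complete_square :
      A ^ 2 / (2 * σ) + -(σ / 2) * t ^ 2 - (A * t + -σ * t ^ 2) = (A - σ * t) ^ 2 / (2 * σ) := by
    field_simp
    ring
  rw [← Real.exp_add, ← Real.exp_add, Real.exp_le_exp, ← sub_nonneg, complete_square]
  positivity

lemma rpow_mul_add_one_rpow_neg {u : ℝ} (hu : 0 ≤ u) (m k : ℝ) :
    u ^ m * (u + 1) ^ (-k) = (u + 1) ^ (m - k) * (u / (u + 1)) ^ m := by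
  have pos : 0 < u + 1 := by linarith
  rw [Real.div_rpow hu pos.le, sub_eq_add_neg, Real.rpow_add pos]
  field_simp

lemma ofReal_div_add_one_rpow_le {u : ℝ} (hu : 0 ≤ u) (m : ℝ) :
    ENNReal.ofReal ((u / (u + 1)) ^ m) ≤ (1 + (ENNReal.ofReal u)⁻¹) ^ m⁻ := by
  have ratio_le_one : u / (u + 1) ≤ 1 := div_le_one_of_le₀ (by linarith) (by linarith)
  rcases le_total 0 m with hm | hm
  · rw [negPart_eq_zero.2 hm, ENNReal.rpow_zero, ENNReal.ofReal_le_one]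
    exact Real.rpow_le_one (by positivity) ratio_le_one hm
  rcases hu.eq_or_lt with rfl | hu
  · rcases hm.eq_or_lt with rfl | hm
    · simp
    · simp [Real.zero_rpow hm.ne]
  · have inv_ratio : u / (u + 1) = (1 + u⁻¹)⁻¹ := by field_simp
    rw [negPart_of_nonpos hm, inv_ratio, Real.inv_rpow (by positivity),
      ← Real.rpow_neg (by positivity), ← ENNReal.ofReal_inv_of_pos hu, ← ENNReal.ofReal_one,
      ← ENNReal.ofReal_add zero_le_one (by positivity),
      ENNReal.ofReal_rpow_of_nonneg (by positivity) (by linarith)]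

lemma ofReal_div_add_one_rpow_mul_le {u ρ : ℝ} (hρ : 0 ≤ ρ) (hρu : ρ ≤ u) (α γ : ℝ) :
    ENNReal.ofReal ((u / (u + 1)) ^ α * (ρ / (ρ + 1)) ^ γ) ≤
      (1 + (ENNReal.ofReal u)⁻¹) ^ (α + γ⁺)⁻ * (1 + (ENNReal.ofReal ρ)⁻¹) ^ γ⁻ := by
  have hu : 0 ≤ u := hρ.trans hρu
  rcases le_total 0 γ with hγ | hγ
  · rw [posPart_of_nonneg hγ, negPart_eq_zero.2 hγ, ENNReal.rpow_zero, mul_one]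
    refine le_trans (ENNReal.ofReal_le_ofReal ?_) (ofReal_div_add_one_rpow_le hu (α + γ))
    calc (u / (u + 1)) ^ α * (ρ / (ρ + 1)) ^ γ ≤ (u / (u + 1)) ^ α * (u / (u + 1)) ^ γ := by
          gcongr ?_ * ?_ ^ _
          rw [div_le_div_iff₀ (by positivity) (by positivity)]
          linarith
      _ ≤ (u / (u + 1)) ^ (α + γ) := Real.le_rpow_add (by positivity) α γ
  · rw [posPart_eq_zero.2 hγ, add_zero, ENNReal.ofReal_mul (by positivity)]
    exact mul_le_mul' (ofReal_div_add_one_rpow_le hu α) (ofReal_div_add_one_rpow_le hρ γ)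

lemma negPart_add_posPart_add_negPart_lt {d α γ : ℝ} (hd : 1 ≤ d) (hαγ : -d < α + γ)
    (hγ : -1 < γ) : (α + γ⁺)⁻ + γ⁻ < d := by
  rcases le_total 0 γ with h | h
  · rw [posPart_of_nonneg h, negPart_eq_zero.2 h, add_zero, negPart_def]
    exact max_lt (by linarith) (by linarith)
  · rw [posPart_eq_zero.2 h, negPart_of_nonpos h, add_zero, negPart_def, ← lt_sub_iff_add_lt]
    exact max_lt (by linarith) (by linarith)

section NormedAddCommGroup

variable {E : Type*} [NormedAddCommGroup E]

lemma rpow_norm_mul_rpow_infDist_mul_exp_le (F : Set E) {σ : ℝ} (hσ : 0 < σ) (α β γ ν : ℝ)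
    (x y : E) :
    ‖y‖ ^ α * (‖y‖ + 1) ^ (-β) * Metric.infDist y F ^ γ * (Metric.infDist y F + 1) ^ (-ν) *
        Real.exp (-σ * ‖x - y‖ ^ 2) ≤
      Real.exp ((|α - β| + |γ - ν|) ^ 2 / (2 * σ)) * (‖x‖ + 1) ^ (α - β) *
          (Metric.infDist x F + 1) ^ (γ - ν) *
        ((‖y‖ / (‖y‖ + 1)) ^ α * (Metric.infDist y F / (Metric.infDist y F + 1)) ^ γ *
          Real.exp (-(σ / 2) * ‖x - y‖ ^ 2)) := by
  have norm_weight := add_one_rpow_le_mul_exp lipschitzWith_one_norm norm_nonneg (α - β) x y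
  have infDist_weight := add_one_rpow_le_mul_exp (Metric.lipschitz_infDist_pt F)
    (fun _ ↦ Metric.infDist_nonneg) (γ - ν) x y
  have absorb := exp_linear_mul_gaussian_le hσ (|α - β| + |γ - ν|) ‖x - y‖
  rw [add_mul, Real.exp_add] at absorb
  have hρx : 0 ≤ Metric.infDist x F := Metric.infDist_nonneg
  have hρy : 0 ≤ Metric.infDist y F := Metric.infDist_nonneg
  rw [mul_assoc (_ * _) (_ ^ γ), rpow_mul_add_one_rpow_neg (norm_nonneg y),
    rpow_mul_add_one_rpow_neg hρy]
  set G := (‖y‖ / (‖y‖ + 1)) ^ α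
  set H := (Metric.infDist y F / (Metric.infDist y F + 1)) ^ γ
  calc (‖y‖ + 1) ^ (α - β) * G * ((Metric.infDist y F + 1) ^ (γ - ν) * H) *
        Real.exp (-σ * ‖x - y‖ ^ 2)
      ≤ (‖x‖ + 1) ^ (α - β) * Real.exp (|α - β| * ‖x - y‖) * G *
          ((Metric.infDist x F + 1) ^ (γ - ν) * Real.exp (|γ - ν| * ‖x - y‖) * H) *
          Real.exp (-σ * ‖x - y‖ ^ 2) := by gcongr
    _ = (‖x‖ + 1) ^ (α - β) * (Metric.infDist x F + 1) ^ (γ - ν) * (G * H) *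
          (Real.exp (|α - β| * ‖x - y‖) * Real.exp (|γ - ν| * ‖x - y‖) *
            Real.exp (-σ * ‖x - y‖ ^ 2)) := by ring
    _ ≤ (‖x‖ + 1) ^ (α - β) * (Metric.infDist x F + 1) ^ (γ - ν) * (G * H) *
          (Real.exp ((|α - β| + |γ - ν|) ^ 2 / (2 * σ)) *
            Real.exp (-(σ / 2) * ‖x - y‖ ^ 2)) := by gcongr
    _ = _ := by ring

lemma ofReal_rpow_norm_mul_rpow_infDist_mul_exp_le {F : Set E} (hF : 0 ∈ F) {σ : ℝ} (hσ : 0 < σ)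
    (α β γ ν : ℝ) (x y : E) :
    ENNReal.ofReal (‖y‖ ^ α * (‖y‖ + 1) ^ (-β) * Metric.infDist y F ^ γ *
        (Metric.infDist y F + 1) ^ (-ν) * Real.exp (-σ * ‖x - y‖ ^ 2)) ≤
      ENNReal.ofReal (Real.exp ((|α - β| + |γ - ν|) ^ 2 / (2 * σ)) * (‖x‖ + 1) ^ (α - β) *
          (Metric.infDist x F + 1) ^ (γ - ν)) *
        ((1 + ‖y‖ₑ⁻¹) ^ (α + γ⁺)⁻ * (1 + (Metric.infEDist y F)⁻¹) ^ γ⁻ *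
          gaussianKernel (σ / 2) x y) := by
  have hρx : 0 ≤ Metric.infDist x F := Metric.infDist_nonneg
  have hρy : 0 ≤ Metric.infDist y F := Metric.infDist_nonneg
  have infDist_le_norm : Metric.infDist y F ≤ ‖y‖ := by
    simpa using Metric.infDist_le_dist_of_mem (x := y) hF
  have ofReal_infDist : ENNReal.ofReal (Metric.infDist y F) = Metric.infEDist y F :=
    ENNReal.ofReal_toReal (Metric.infEDist_ne_top ⟨0, hF⟩)
  have singular_part := ofReal_div_add_one_rpow_mul_le hρy infDist_le_norm α γ
  rw [ofReal_norm, ofReal_infDist] at singular_part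
  refine (ENNReal.ofReal_le_ofReal
    (rpow_norm_mul_rpow_infDist_mul_exp_le F hσ α β γ ν x y)).trans ?_
  rw [ENNReal.ofReal_mul (by positivity), ENNReal.ofReal_mul (p := _ ^ α * _) (by positivity)]
  grw [singular_part, gaussianKernel]

end NormedAddCommGroup

/-! ### The planar wedge -/

section Wedge

variable {κ : ℝ}

lemma wedge_eq_setOf_norm_mul_cos_lt (hκ0 : 0 ≤ κ) (hκ2 : κ ≤ 2 * Real.pi) :
    wedge κ = {y | ‖y‖ * Real.cos (κ / 2) < y 0} := by
  ext y
  constructor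
  · rintro ⟨r, η, hr, hη_left, hη_right, hy0, hy1⟩
    have norm_eq : ‖y‖ = r := by
      rw [EuclideanSpace.norm_eq, Real.sqrt_eq_iff_mul_self_eq (by positivity) hr.le]
      simp only [Fin.sum_univ_two, Real.norm_eq_abs, sq_abs, hy0, hy1]
      linear_combination r ^ 2 * Real.sin_sq_add_cos_sq η
    rw [Set.mem_ofPred_eq, norm_eq, hy0, ← Real.cos_abs η]
    gcongr
    exact Real.cos_lt_cos_of_nonneg_of_le_pi (abs_nonneg _) (by linarith)
      (abs_lt.2 ⟨hη_left, hη_right⟩)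
  · intro (hy : ‖y‖ * Real.cos (κ / 2) < y 0)
    have norm_pos : 0 < ‖y‖ := by
      rw [norm_pos_iff]
      rintro rfl
      simp at hy
    let z : ℂ := ⟨y 0, y 1⟩
    have norm_z : ‖z‖ = ‖y‖ := by
      rw [EuclideanSpace.norm_eq, Complex.norm_eq_sqrt_sq_add_sq]
      simp [z]
    have hy0 : y 0 = ‖y‖ * Real.cos z.arg := by rw [← norm_z, Complex.norm_mul_cos_arg]
    have hy1 : y 1 = ‖y‖ * Real.sin z.arg := by rw [← norm_z, Complex.norm_mul_sin_arg]
    have cos_lt : Real.cos (κ / 2) < Real.cos |z.arg| := by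
      rw [hy0] at hy
      rw [Real.cos_abs]
      exact lt_of_mul_lt_mul_left hy norm_pos.le
    have abs_arg_lt : |z.arg| < κ / 2 := by
      contrapose! cos_lt
      exact Real.cos_le_cos_of_nonneg_of_le_pi (by linarith) (Complex.abs_arg_le_pi z) cos_lt
    exact ⟨‖y‖, z.arg, norm_pos, (abs_lt.1 abs_arg_lt).1, (abs_lt.1 abs_arg_lt).2, hy0, hy1⟩

lemma zero_mem_frontier_wedge (hκ : 0 < κ) : 0 ∈ frontier (wedge κ) := by
  refine ⟨Metric.mem_closure_iff.2 fun ε hε ↦ ⟨!₂[ε / 2, 0], ?_, ?_⟩, fun mem_interior ↦ ?_⟩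
  · exact ⟨ε / 2, 0, by positivity, by linarith, by linarith, by simp, by simp⟩
  · rw [dist_zero_left, EuclideanSpace.norm_eq]
    simpa [Fin.sum_univ_two, Real.sqrt_sq (half_pos hε).le] using hε
  · obtain ⟨r, η, hr, -, -, h_cos, h_sin⟩ := interior_subset mem_interior
    have cos_eq_zero : Real.cos η = 0 := by simpa [hr.ne'] using h_cos
    have sin_eq_zero : Real.sin η = 0 := by simpa [hr.ne'] using h_sin
    simpa [cos_eq_zero, sin_eq_zero] using Real.sin_sq_add_cos_sq η

/-- The line through the origin in direction `(cos η, sin η)`; the boundary of `wedge κ` lies on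
the lines with `η = ± κ / 2`. -/
noncomputable def lineOfAngle (η : ℝ) : Submodule ℝ (EuclideanSpace ℝ (Fin 2)) :=
  Submodule.span ℝ {!₂[Real.cos η, Real.sin η]}

lemma lineOfAngle_ne_top (η : ℝ) : lineOfAngle η ≠ ⊤ := by
  intro eq_top
  have finrank_le : finrank ℝ (lineOfAngle η) ≤ 1 :=
    (finrank_span_le_card _).trans (by simp)
  rw [eq_top, finrank_top, finrank_euclideanSpace_fin] at finrank_le
  exact absurd finrank_le (by norm_num)

lemma frontier_wedge_subset (hκ0 : 0 ≤ κ) (hκ2 : κ ≤ 2 * Real.pi) :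
    frontier (wedge κ) ⊆ ⋃ i, (![lineOfAngle (κ / 2), lineOfAngle (-(κ / 2))] i : Set _) := by
  intro z hz
  rw [wedge_eq_setOf_norm_mul_cos_lt hκ0 hκ2] at hz
  have z_zero : ‖z‖ * Real.cos (κ / 2) = z 0 :=
    frontier_lt_subset_eq (by fun_prop) (by fun_prop) hz
  have z_one : z 1 ^ 2 = (‖z‖ * Real.sin (κ / 2)) ^ 2 := by
    have norm_sq : ‖z‖ ^ 2 = z 0 ^ 2 + z 1 ^ 2 := by
      simp [EuclideanSpace.norm_sq_eq, Fin.sum_univ_two]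
    rw [← z_zero] at norm_sq
    linear_combination -norm_sq - ‖z‖ ^ 2 * Real.sin_sq_add_cos_sq (κ / 2)
  rw [Set.mem_iUnion]
  rcases sq_eq_sq_iff_eq_or_eq_neg.1 z_one with h | h
  · refine ⟨0, Submodule.mem_span_singleton.2 ⟨‖z‖, ?_⟩⟩
    ext i
    fin_cases i <;> simp [z_zero, h]
  · refine ⟨1, Submodule.mem_span_singleton.2 ⟨‖z‖, ?_⟩⟩
    ext i
    fin_cases i <;> simp [z_zero, h]

end Wedge

theorem stmt_1_general {E : Type*} [NormedAddCommGroup E] [InnerProductSpace ℝ E]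
    [FiniteDimensional ℝ E] [MeasurableSpace E] [BorelSpace E] {ι : Type*} [Finite ι]
    {V : ι → Submodule ℝ E} (hV : ∀ i, V i ≠ ⊤) {F : Set E} (zero_mem : 0 ∈ F)
    (hF : F ⊆ ⋃ i, (V i : Set E)) (σ α β γ ν : ℝ) (hσ : 0 < σ)
    (hαγ : -(finrank ℝ E : ℝ) < α + γ) (hγ : -1 < γ) :
    ∃ N : ℝ, 0 < N ∧ ∀ x : E,
      (∫⁻ y : E, ENNReal.ofReal
          (‖y‖ ^ α * (‖y‖ + 1) ^ (-β) * Metric.infDist y F ^ γ * (Metric.infDist y F + 1) ^ (-ν) *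
            Real.exp (-σ * ‖x - y‖ ^ 2)))
        ≤ ENNReal.ofReal (N * (‖x‖ + 1) ^ (α - β) * (Metric.infDist x F + 1) ^ (γ - ν)) := by
  obtain ⟨i₀, -⟩ := Set.mem_iUnion.1 (hF zero_mem)
  have : Nonempty ι := ⟨i₀⟩
  have one_le_finrank : (1 : ℝ) ≤ finrank ℝ E := by
    exact_mod_cast (Nat.zero_le _).trans_lt (Submodule.finrank_lt (hV i₀))
  have negPart_lt_one : γ⁻ < 1 := by
    rw [negPart_def]
    exact max_lt (by linarith) one_pos
  obtain ⟨M, M_ne_top, lintegral_le⟩ :=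
    exists_lintegral_infEDist_mul_gaussianKernel_le_of_subset_iUnion hV hF (half_pos hσ)
      (negPart_nonneg (α + γ⁺)) (negPart_nonneg γ) negPart_lt_one
      (negPart_add_posPart_add_negPart_lt one_le_finrank hαγ hγ)
  obtain ⟨R, M_lt, -⟩ := ENNReal.lt_iff_exists_nnreal_btwn.1 M_ne_top.lt_top
  have R_pos : 0 < R := by exact_mod_cast (zero_le (a := M)).trans_lt M_lt
  refine ⟨R * Real.exp ((|α - β| + |γ - ν|) ^ 2 / (2 * σ)), by positivity, fun x ↦ ?_⟩
  grw [lintegral_mono (ofReal_rpow_norm_mul_rpow_infDist_mul_exp_le zero_mem hσ α β γ ν x),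
    lintegral_const_mul' _ _ ENNReal.ofReal_ne_top, lintegral_le x, M_lt]
  rw [mul_comm, ← ENNReal.ofReal_coe_nnreal, ← ENNReal.ofReal_mul R.coe_nonneg]
  simp only [mul_assoc, le_refl]

/-- Let `κ ∈ (0, 2π)`, `σ > 0`, `α + γ > −2`, `γ > −1`, `β, ν ∈ ℝ`.
Then there is `N = N(κ, α, β, γ, ν, σ) > 0` such that for every `x ∈ D^(κ)`,
`∫_{D^(κ)} |y|^α (|y|+1)^(−β) ρ(y)^γ (ρ(y)+1)^(−ν) e^(−σ|x−y|²) dy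
  ≤ N (|x|+1)^(α−β) (ρ(x)+1)^(γ−ν)`. -/
theorem stmt_1 (κ : ℝ) (hκ0 : 0 < κ) (hκ2 : κ < 2 * Real.pi)
    (σ α β γ ν : ℝ) (hσ : 0 < σ) (hαγ : -2 < α + γ) (hγ : -1 < γ) :
    ∃ N : ℝ, 0 < N ∧ ∀ x ∈ wedge κ,
      (∫⁻ y in wedge κ,
          ENNReal.ofReal
            (‖y‖ ^ α * (‖y‖ + 1) ^ (-β) * wedgeDist κ y ^ γ * (wedgeDist κ y + 1) ^ (-ν) *
              Real.exp (-σ * ‖x - y‖ ^ 2)))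
        ≤ ENNReal.ofReal (N * (‖x‖ + 1) ^ (α - β) * (wedgeDist κ x + 1) ^ (γ - ν)) := by
  obtain ⟨N, N_pos, lintegral_le⟩ := stmt_1_general
    (Fin.forall_fin_two.2 ⟨lineOfAngle_ne_top _, lineOfAngle_ne_top _⟩)
    (zero_mem_frontier_wedge hκ0) (frontier_wedge_subset hκ0.le hκ2.le) σ α β γ ν hσ
    (by simpa using hαγ) hγ
  exact ⟨N, N_pos, fun x _ ↦ (setLIntegral_le_lintegral _ _).trans (lintegral_le x)⟩
end

section
/- (Boundary decay of caloric functions on planar wedges; the critical exponent for the heat operator on D^(κ) is π/κ.) Let κ ∈ (0, 2π), D = D^(κ) ⊂ ℝ², and let λ satisfy 0 < λ < π/κ. Then there exists a constant K₀ = K₀(κ, λ) > 0 with the following property. Let R > 0, t₀ ∈ ℝ, and let v : ℝ × ℝ² → ℝ be a function such that: (a) v is continuous on (t₀ − R², t₀] × ( closure(D) ∩ B_R(0) ); (b) for every (t, x) ∈ (t₀ − R², t₀] × (D ∩ B_R(0)) the time derivative ∂_t v(t,x) and the spatial second derivatives of v exist and ∂_t v(t,x) = Δ_x v(t,x); (c)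 v(t, x) = 0 for all t ∈ (t₀ − R², t₀] and x ∈ ∂D ∩ B_R(0); (d) for every r ∈ (0, R), sup_{t ∈ (t₀ − r², t₀]} ∫_{D ∩ B_r(0)} v(t, x)² dx < ∞ and ∫_{t₀ − r²}^{t₀} ∫_{D ∩ B_r(0)} |∇_x v(t,x)|² dx dt < ∞. Then for every (t, x) ∈ (t₀ − R²/4, t₀] × (D ∩ B_{R/2}(0)), |v(t, x)| ≤ K₀ (|x|/R)^λ · sup { |v(s, y)| : s ∈ (t₀ − 9R²/16, t₀], y ∈ D ∩ B_{3R/4}(0) }. -/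
open MeasureTheory

/-!
In polar coordinates, rescaled parabolically so that the point of interest sits at time `0` in the
unit cylinder `-1 ≤ s ≤ 0`, `0 ≤ r ≤ 1`, both `v` and `-v` are compared with the barrier
`F = (r ^ q - B s) ^ p cos (μ θ)`, where `p q = λ < μ < π / κ`. Since `r² Δ = (r ∂ᵣ)² + ∂_θ²`, the
condition `1 ≤ 2 p` gives `r² Δ F ≤ -(μ² - λ²) F`, and `r² ≤ r ^ q` (as `q ≤ 2`) bounds
`r² |∂ₛ F|` by `B p F`; so `F` is a strict supersolution once `B p < μ² - λ²`. On the faces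
`s = -1` and `r = 1` the barrier is bounded below by a positive constant, hence dominates `± v` up
to a constant there, and at time `0` it is at most `r ^ λ`. The maximum principle propagates the
comparison to the whole cylinder.
-/

open Set Filter Topology

/-- `f` is differentiable near `x` with derivative `f'`, and `f'` has derivative `f''` at `x`.
Continuity of the second derivative is not required. -/
def HasDerivTwiceAt {E : Type*} [NormedAddCommGroup E] [NormedSpace ℝ E]
    (f f' : ℝ → E) (f'' : E) (x : ℝ) : Prop :=
  (∀ᶠ y in 𝓝 x, HasDerivAt f (f' y) y) ∧ HasDerivAt f' f'' x

namespace HasDerivTwiceAt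

variable {f f' g g' : ℝ → ℝ} {f'' g'' x : ℝ}

theorem sub (hf : HasDerivTwiceAt f f' f'' x) (hg : HasDerivTwiceAt g g' g'' x) :
    HasDerivTwiceAt (fun y => f y - g y) (fun y => f' y - g' y) (f'' - g'') x :=
  ⟨(hf.1.and hg.1).mono fun _ h => h.1.sub h.2, hf.2.sub hg.2⟩

theorem const_mul (c : ℝ) (hf : HasDerivTwiceAt f f' f'' x) :
    HasDerivTwiceAt (fun y => c * f y) (fun y => c * f' y) (c * f'') x :=
  ⟨hf.1.mono fun _ h => h.const_mul c, hf.2.const_mul c⟩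

theorem mul_const (hf : HasDerivTwiceAt f f' f'' x) (c : ℝ) :
    HasDerivTwiceAt (fun y => f y * c) (fun y => f' y * c) (f'' * c) x :=
  ⟨hf.1.mono fun _ h => h.mul_const c, hf.2.mul_const c⟩

theorem comp_hasFDerivAt {E : Type*} [NormedAddCommGroup E] [NormedSpace ℝ E] {u : E → ℝ}
    {u' : E → E →L[ℝ] ℝ} {u'' : E →L[ℝ] E →L[ℝ] ℝ} {γ γ' : ℝ → E} {γ'' : E}
    (hu : ∀ᶠ y in 𝓝 x, HasFDerivAt u (u' (γ y)) (γ y)) (hu' : HasFDerivAt u' u'' (γ x))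
    (hγ : HasDerivTwiceAt γ γ' γ'' x) :
    HasDerivTwiceAt (fun y => u (γ y)) (fun y => u' (γ y) (γ' y))
      (u'' (γ' x) (γ' x) + u' (γ x) γ'') x :=
  ⟨(hu.and hγ.1).mono fun y h => h.1.comp_hasDerivAt y h.2,
    (hu'.comp_hasDerivAt x hγ.1.self_of_nhds).clm_apply hγ.2⟩

theorem comp_const_mul {c : ℝ} (hf : HasDerivTwiceAt f f' f'' (c * x)) :
    HasDerivTwiceAt (fun y => f (c * y)) (fun y => c * f' (c * y)) (c ^ 2 * f'') x := by
  have hscale (y : ℝ) : HasDerivAt (c * ·) c y := by simpa using (hasDerivAt_id y).const_mul c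
  constructor
  · filter_upwards [(hscale x).continuousAt.eventually hf.1] with y hy
    simpa only [Function.comp_def, mul_comm] using hy.comp y (hscale y)
  · exact ((hf.2.comp x (hscale x)).const_mul c).congr_deriv (by ring)

theorem deriv_eq_zero_of_isLocalMax (hf : HasDerivTwiceAt f f' f'' x) (hmax : IsLocalMax f x) :
    f' x = 0 :=
  hmax.hasDerivAt_eq_zero hf.1.self_of_nhds

theorem nonpos_of_isLocalMax (hf : HasDerivTwiceAt f f' f'' x) (hmax : IsLocalMax f x) :
    f'' ≤ 0 := by
  by_contra! hpos
  have hderiv : deriv f =ᶠ[𝓝 x] f' := hf.1.mono fun y hy => hy.deriv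
  have hderiv₂ : deriv (deriv f) x = f'' := by rw [hderiv.deriv_eq, hf.2.deriv]
  have hmin : IsLocalMin f x := isLocalMin_of_deriv_deriv_pos (hderiv₂ ▸ hpos)
    hmax.deriv_eq_zero hf.1.self_of_nhds.continuousAt
  have hconst : f =ᶠ[𝓝 x] fun _ => f x := by
    filter_upwards [hmin, hmax] with y hle hge using le_antisymm hge hle
  have hzero : deriv (deriv f) x = 0 := by simpa using hconst.deriv.deriv_eq
  exact hpos.ne' (hderiv₂ ▸ hzero)

end HasDerivTwiceAt

theorem nonneg_of_hasDerivAt_of_isMaxOn_Icc_right {f : ℝ → ℝ} {f' a b : ℝ} (hab : a < b)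
    (hf : HasDerivAt f f' b) (hmax : IsMaxOn f (Icc a b) b) : 0 ≤ f' := by
  have hcone : a - b ∈ posTangentConeAt (Icc a b) b :=
    sub_mem_posTangentConeAt_of_segment_subset (by rw [segment_symm, segment_eq_Icc hab.le])
  have hle := hmax.localize.hasFDerivWithinAt_nonpos hf.hasFDerivAt.hasFDerivWithinAt hcone
  simp only [ContinuousLinearMap.toSpanSingleton_apply, smul_eq_mul] at hle
  exact nonneg_of_mul_nonpos_right hle (sub_neg.2 hab)

/-- The heat operator `∂ₛ - Δ`, written in polar coordinates as
`∂ₛ - (∂ᵣᵣ + r⁻¹ ∂ᵣ + r⁻² ∂_θθ)`, takes the value `w` on the function `U` of `(s, r, θ)` at the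
given point. All the derivatives involved are required to exist. -/
def HasPolarHeatAt (U : ℝ × ℝ × ℝ → ℝ) (w s r θ : ℝ) : Prop :=
  ∃ (Us : ℝ) (Ur : ℝ → ℝ) (Urr : ℝ) (Uθ : ℝ → ℝ) (Uθθ : ℝ),
    HasDerivAt (fun s' => U (s', r, θ)) Us s ∧
    HasDerivTwiceAt (fun r' => U (s, r', θ)) Ur Urr r ∧
    HasDerivTwiceAt (fun θ' => U (s, r, θ')) Uθ Uθθ θ ∧
    w = Us - (Urr + Ur r / r + Uθθ / r ^ 2)

namespace HasPolarHeatAt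

variable {U V : ℝ × ℝ × ℝ → ℝ} {w z s r θ : ℝ}

theorem sub (hU : HasPolarHeatAt U w s r θ) (hV : HasPolarHeatAt V z s r θ) :
    HasPolarHeatAt (fun p => U p - V p) (w - z) s r θ := by
  obtain ⟨Us, Ur, Urr, Uθ, Uθθ, hUs, hUr, hUθ, rfl⟩ := hU
  obtain ⟨Vs, Vr, Vrr, Vθ, Vθθ, hVs, hVr, hVθ, rfl⟩ := hV
  exact ⟨_, _, _, _, _, hUs.sub hVs, hUr.sub hVr, hUθ.sub hVθ, by ring⟩

theorem const_mul (c : ℝ) (hU : HasPolarHeatAt U w s r θ) :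
    HasPolarHeatAt (fun p => c * U p) (c * w) s r θ := by
  obtain ⟨Us, Ur, Urr, Uθ, Uθθ, hUs, hUr, hUθ, rfl⟩ := hU
  exact ⟨_, _, _, _, _, hUs.const_mul c, hUr.const_mul c, hUθ.const_mul c, by ring⟩

theorem parabolic_rescale {ρ t : ℝ} (hρ : ρ ≠ 0)
    (hU : HasPolarHeatAt U w (t + ρ ^ 2 * s) (ρ * r) θ) :
    HasPolarHeatAt (fun p => U (t + ρ ^ 2 * p.1, ρ * p.2.1, p.2.2)) (ρ ^ 2 * w) s r θ := by
  obtain ⟨Us, Ur, Urr, Uθ, Uθθ, hUs, hUr, hUθ, rfl⟩ := hU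
  have hshift : HasDerivAt (fun s' => t + ρ ^ 2 * s') (ρ ^ 2) s := by
    simpa using ((hasDerivAt_id s).const_mul (ρ ^ 2)).const_add t
  have hUs' := hUs.comp s hshift
  refine ⟨_, _, _, _, _, hUs', hUr.comp_const_mul, hUθ, ?_⟩
  field_simp

theorem nonneg_of_isMaxOn {a b : ℝ} {A B : Set ℝ} (hU : HasPolarHeatAt U w s r θ)
    (hs : s ∈ Ioc a b) (hA : A ∈ 𝓝 r) (hB : B ∈ 𝓝 θ)
    (hmax : IsMaxOn U (Icc a b ×ˢ A ×ˢ B) (s, r, θ)) : 0 ≤ w := by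
  obtain ⟨Us, Ur, Urr, Uθ, Uθθ, hUs, hUr, hUθ, rfl⟩ := hU
  have hrA : r ∈ A := mem_of_mem_nhds hA
  have hθB : θ ∈ B := mem_of_mem_nhds hB
  have hs' : s ∈ Icc a b := Ioc_subset_Icc_self hs
  have hmax_s : IsMaxOn (fun s' => U (s', r, θ)) (Icc a s) s :=
    fun s' h => hmax ⟨Icc_subset_Icc_right hs.2 h, hrA, hθB⟩
  have hmax_r : IsLocalMax (fun r' => U (s, r', θ)) r :=
    mem_of_superset hA fun r' h => hmax ⟨hs', h, hθB⟩
  have hmax_θ : IsLocalMax (fun θ' => U (s, r, θ')) θ :=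
    mem_of_superset hB fun θ' h => hmax ⟨hs', hrA, h⟩
  have hUs_nonneg : 0 ≤ Us := nonneg_of_hasDerivAt_of_isMaxOn_Icc_right hs.1 hUs hmax_s
  have hUr_zero : Ur r = 0 := hUr.deriv_eq_zero_of_isLocalMax hmax_r
  have hUrr_nonpos : Urr ≤ 0 := hUr.nonpos_of_isLocalMax hmax_r
  have hUθθ_nonpos : Uθθ / r ^ 2 ≤ 0 :=
    div_nonpos_of_nonpos_of_nonneg (hUθ.nonpos_of_isLocalMax hmax_θ) (sq_nonneg r)
  rw [hUr_zero, zero_div]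
  linarith

end HasPolarHeatAt

theorem nonpos_of_polarHeat_neg {U : ℝ × ℝ × ℝ → ℝ} {s₀ s₁ r₀ r₁ θ₀ θ₁ : ℝ}
    (hcont : ContinuousOn U (Icc s₀ s₁ ×ˢ Icc r₀ r₁ ×ˢ Icc θ₀ θ₁))
    (hboundary : ∀ p ∈ (Icc s₀ s₁ ×ˢ Icc r₀ r₁ ×ˢ Icc θ₀ θ₁) \
      (Ioc s₀ s₁ ×ˢ Ioo r₀ r₁ ×ˢ Ioo θ₀ θ₁), U p ≤ 0)
    (hheat : ∀ s ∈ Ioc s₀ s₁, ∀ r ∈ Ioo r₀ r₁, ∀ θ ∈ Ioo θ₀ θ₁,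
      ∃ w < 0, HasPolarHeatAt U w s r θ) :
    ∀ p ∈ Icc s₀ s₁ ×ˢ Icc r₀ r₁ ×ˢ Icc θ₀ θ₁, U p ≤ 0 := by
  intro p hp
  have hcompact : IsCompact (Icc s₀ s₁ ×ˢ Icc r₀ r₁ ×ˢ Icc θ₀ θ₁) :=
    isCompact_Icc.prod (isCompact_Icc.prod isCompact_Icc)
  obtain ⟨q, hq, hmax⟩ := hcompact.exists_isMaxOn ⟨p, hp⟩ hcont
  refine (hmax hp).trans (hboundary q ⟨hq, fun ⟨hs, hr, hθ⟩ => ?_⟩)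
  obtain ⟨w, hw, hUw⟩ := hheat q.1 hs q.2.1 hr q.2.2 hθ
  exact hw.not_ge <| hUw.nonneg_of_isMaxOn hs (Icc_mem_nhds hr.1 hr.2) (Icc_mem_nhds hθ.1 hθ.2) hmax

theorem cos_mul_le_cos_mul {μ k θ : ℝ} (hμ : 0 ≤ μ) (hk : μ * k ≤ Real.pi)
    (hθ : θ ∈ Icc (-k) k) :
    Real.cos (μ * k) ≤ Real.cos (μ * θ) := by
  rw [← Real.cos_abs (μ * θ), abs_mul, abs_of_nonneg hμ]
  exact Real.cos_le_cos_of_nonneg_of_le_pi (by positivity) hk (by gcongr; exact abs_le.2 hθ)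

theorem hasDerivTwiceAt_mul_cos (A μ θ : ℝ) :
    HasDerivTwiceAt (fun y => A * Real.cos (μ * y)) (fun y => A * (μ * -Real.sin (μ * y)))
      (-(μ ^ 2 * A * Real.cos (μ * θ))) θ := by
  have hcos : HasDerivTwiceAt Real.cos (fun y => -Real.sin y) (-Real.cos (μ * θ)) (μ * θ) :=
    ⟨.of_forall Real.hasDerivAt_cos, (Real.hasDerivAt_sin _).neg⟩
  convert hcos.comp_const_mul.const_mul A using 1
  ring

theorem hasDerivTwiceAt_rpow_sub_rpow {q p z r : ℝ} (hr : 0 < r) (hz : z ≤ 0) :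
    HasDerivTwiceAt (fun y => (y ^ q - z) ^ p)
      (fun y => p * q * (y ^ (q - 1) * (y ^ q - z) ^ (p - 1)))
      (p * q ^ 2 * r ^ q * (r ^ q - z) ^ p * (p * r ^ q - z) / (r ^ q - z) ^ 2 / r ^ 2
        - p * q * r ^ q * (r ^ q - z) ^ p / (r ^ q - z) / r ^ 2) r := by
  have hpos {y : ℝ} (hy : 0 < y) : 0 < y ^ q - z := by
    have := Real.rpow_pos_of_pos hy q
    linarith
  have hbase (m : ℝ) {y : ℝ} (hy : 0 < y) : HasDerivAt (· ^ m) (m * y ^ (m - 1)) y :=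
    Real.hasDerivAt_rpow_const (.inl hy.ne')
  have hpow (m : ℝ) {y : ℝ} (hy : 0 < y) : HasDerivAt (fun x => (x ^ q - z) ^ m)
      (q * y ^ (q - 1) * m * (y ^ q - z) ^ (m - 1)) y :=
    ((hbase q hy).sub_const z).rpow_const (.inl (hpos hy).ne')
  constructor
  · filter_upwards [Ioi_mem_nhds hr] with y hy
    exact (hpow p hy).congr_deriv (by ring)
  · refine (((hbase (q - 1) hr).mul (hpow (p - 1) hr)).const_mul (p * q)).congr_deriv ?_
    have hu := (hpos hr).ne'
    simp only [Real.rpow_sub_one hr.ne', Real.rpow_sub_one hu]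
    field_simp
    ring

/-- Supersolution `(r ^ q - B s) ^ p cos (μ θ)` of the heat equation in polar coordinates,
homogeneous of degree `p q` in `r` at time `s = 0`. -/
noncomputable def wedgeBarrier (q p B μ : ℝ) (P : ℝ × ℝ × ℝ) : ℝ :=
  (P.2.1 ^ q - B * P.1) ^ p * Real.cos (μ * P.2.2)

section wedgeBarrier

variable {q p B μ s r θ : ℝ}

theorem continuous_wedgeBarrier (hq : 0 ≤ q) (hp : 0 ≤ p) :
    Continuous (wedgeBarrier q p B μ) := by
  have hbase : Continuous fun P : ℝ × ℝ × ℝ => P.2.1 ^ q - B * P.1 :=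
    (continuous_snd.fst.rpow_const fun _ => .inr hq).sub (continuous_const.mul continuous_fst)
  exact (hbase.rpow_const fun _ => .inr hp).mul (by fun_prop)

theorem hasPolarHeatAt_wedgeBarrier (hB : 0 ≤ B) (hs : s ≤ 0) (hr : 0 < r) :
    HasPolarHeatAt (wedgeBarrier q p B μ)
      ((r ^ q - B * s) ^ p * Real.cos (μ * θ) / (r ^ 2 * (r ^ q - B * s) ^ 2) *
        (μ ^ 2 * (r ^ q - B * s) ^ 2 - p * q ^ 2 * r ^ q * (p * r ^ q - B * s)
          - B * p * r ^ 2 * (r ^ q - B * s))) s r θ := by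
  have hBs : B * s ≤ 0 := mul_nonpos_of_nonneg_of_nonpos hB hs
  have hu : 0 < r ^ q - B * s := by linarith [Real.rpow_pos_of_pos hr q]
  have htime : HasDerivAt (fun s' => (r ^ q - B * s') ^ p * Real.cos (μ * θ))
      (-B * p * (r ^ q - B * s) ^ (p - 1) * Real.cos (μ * θ)) s := by
    have hlin : HasDerivAt (fun s' => r ^ q - B * s') (-B) s := by
      simpa using ((hasDerivAt_id s).const_mul B).const_sub (r ^ q)
    exact (hlin.rpow_const (.inl hu.ne')).mul_const _
  have hradial := (hasDerivTwiceAt_rpow_sub_rpow (q := q) (p := p) hr hBs).mul_const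
    (Real.cos (μ * θ))
  have hangular := hasDerivTwiceAt_mul_cos ((r ^ q - B * s) ^ p) μ θ
  refine ⟨_, _, _, _, _, htime, hradial, hangular, ?_⟩
  simp only [Real.rpow_sub_one hr.ne', Real.rpow_sub_one hu.ne']
  field_simp
  ring

theorem wedgeBarrier_bracket_pos {h z w : ℝ} (hh : 0 < h) (hz : 0 ≤ z) (hw : w ≤ h)
    (hp : 1 ≤ 2 * p) (hB : 0 ≤ B) (hBp : B * p < μ ^ 2 - (p * q) ^ 2) :
    0 < μ ^ 2 * (h + z) ^ 2 - p * q ^ 2 * h * (p * h + z) - B * p * w * (h + z) := by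
  have hp0 : 0 < p := by linarith
  have hradial : p * q ^ 2 * h * (p * h + z) ≤ (p * q) ^ 2 * (h + z) ^ 2 := by
    have hnonneg : 0 ≤ p * q ^ 2 * ((2 * p - 1) * h * z + p * z ^ 2) := by
      have := sub_nonneg.2 hp
      positivity
    linear_combination hnonneg
  have htime : B * p * w * (h + z) ≤ B * p * (h + z) ^ 2 :=
    calc B * p * w * (h + z) ≤ B * p * (h + z) * (h + z) := by gcongr; linarith
      _ = B * p * (h + z) ^ 2 := by ring
  have hstrict : B * p * (h + z) ^ 2 < (μ ^ 2 - (p * q) ^ 2) * (h + z) ^ 2 := by gcongr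
  linarith

theorem wedgeBarrier_polarHeat_pos (hq : q ≤ 2) (hp : 1 ≤ 2 * p) (hB : 0 ≤ B)
    (hBp : B * p < μ ^ 2 - (p * q) ^ 2) (hs : s ≤ 0) (hr : r ∈ Ioo 0 1)
    (hcos : 0 < Real.cos (μ * θ)) : ∃ w > 0, HasPolarHeatAt (wedgeBarrier q p B μ) w s r θ := by
  refine ⟨_, ?_, hasPolarHeatAt_wedgeBarrier hB hs hr.1⟩
  have hh : 0 < r ^ q := Real.rpow_pos_of_pos hr.1 q
  have hz : 0 ≤ -(B * s) := by nlinarith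
  have hr_sq : r ^ 2 ≤ r ^ q := by
    rw [← Real.rpow_two]
    exact Real.rpow_le_rpow_of_exponent_ge hr.1 hr.2.le hq
  have hbracket := wedgeBarrier_bracket_pos hh hz hr_sq hp hB hBp
  simp only [← sub_eq_add_neg] at hbracket
  have hu : 0 < r ^ q - B * s := by linarith
  have hr0 : 0 < r := hr.1
  positivity

theorem wedgeBarrier_nonneg (hB : 0 ≤ B) (hs : s ≤ 0) (hr : 0 ≤ r)
    (hcos : 0 ≤ Real.cos (μ * θ)) : 0 ≤ wedgeBarrier q p B μ (s, r, θ) := by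
  have hBs : B * s ≤ 0 := mul_nonpos_of_nonneg_of_nonpos hB hs
  exact mul_nonneg (Real.rpow_nonneg (by linarith [Real.rpow_nonneg hr q]) p) hcos

theorem le_wedgeBarrier {c : ℝ} (hp : 0 ≤ p) (hB0 : 0 ≤ B) (hB1 : B ≤ 1) (hs : s ≤ 0)
    (hr : 0 ≤ r) (hc : 0 ≤ c) (hcos : c ≤ Real.cos (μ * θ)) (h : s = -1 ∨ r = 1) :
    B ^ p * c ≤ wedgeBarrier q p B μ (s, r, θ) := by
  have hbase : B ≤ r ^ q - B * s := by
    rcases h with rfl | rfl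
    · linarith [Real.rpow_nonneg hr q]
    · rw [Real.one_rpow]
      linarith [mul_nonpos_of_nonneg_of_nonpos hB0 hs]
  have := hB0.trans hbase
  rw [wedgeBarrier]
  gcongr

theorem wedgeBarrier_zero_le (hr : 0 ≤ r) : wedgeBarrier q p B μ (0, r, θ) ≤ r ^ (p * q) := by
  rw [wedgeBarrier, mul_zero, sub_zero, ← Real.rpow_mul hr, mul_comm q]
  exact mul_le_of_le_one_right (Real.rpow_nonneg hr _) (Real.cos_le_one _)

end wedgeBarrier

/-- Conditions on the parameters under which `wedgeBarrier q p B μ` is a strict supersolution on the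
unit cylinder over the sector `|θ| ≤ k`. -/
structure IsBarrierParams (k q p B μ : ℝ) : Prop where
  q_nonneg : 0 ≤ q
  q_le_two : q ≤ 2
  one_le_two_mul_p : 1 ≤ 2 * p
  B_pos : 0 < B
  B_le_one : B ≤ 1
  B_mul_p_lt : B * p < μ ^ 2 - (p * q) ^ 2
  μ_nonneg : 0 ≤ μ
  μ_mul_k_lt : μ * k < Real.pi / 2

namespace IsBarrierParams

variable {k q p B μ θ : ℝ}

theorem cos_mul_le (h : IsBarrierParams k q p B μ) (hθ : θ ∈ Icc (-k) k) :
    Real.cos (μ * k) ≤ Real.cos (μ * θ) :=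
  cos_mul_le_cos_mul h.μ_nonneg (by linarith [h.μ_mul_k_lt, Real.pi_pos]) hθ

theorem cos_pos (h : IsBarrierParams k q p B μ) (hk : 0 ≤ k) : 0 < Real.cos (μ * k) :=
  Real.cos_pos_of_mem_Ioo
    ⟨by linarith [Real.pi_pos, mul_nonneg h.μ_nonneg hk], h.μ_mul_k_lt⟩

end IsBarrierParams

theorem exists_isBarrierParams {k lam : ℝ} (hk : 0 < k) (hlam : 0 < lam)
    (hlamk : lam * k < Real.pi / 2) :
    ∃ q p B μ : ℝ, IsBarrierParams k q p B μ ∧ p * q = lam := by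
  obtain ⟨μ, hlamμ, hμk⟩ := exists_between ((lt_div_iff₀ hk).2 hlamk)
  have hgap : 0 < μ ^ 2 - lam ^ 2 := by nlinarith
  obtain ⟨B, hB, hB_lt⟩ :=
    exists_between (lt_min one_pos (div_pos hgap (by linarith : 0 < 1 + lam)))
  obtain ⟨hB1, hBgap⟩ := lt_min_iff.1 hB_lt
  -- any `p ≥ 1 / 2` with `lam / p ≤ 2` would do
  have hpq : (1 + lam) * (lam / (1 + lam)) = lam := by field_simp
  refine ⟨lam / (1 + lam), 1 + lam, B, μ, ?_, hpq⟩
  exact {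
    q_nonneg := by positivity
    q_le_two := by rw [div_le_iff₀ (by positivity)]; linarith
    one_le_two_mul_p := by linarith
    B_pos := hB
    B_le_one := hB1.le
    B_mul_p_lt := by rw [hpq]; exact (lt_div_iff₀ (by positivity)).1 hBgap
    μ_nonneg := by linarith
    μ_mul_k_lt := (lt_div_iff₀ hk).1 hμk }

/-- The closed cylinder `-1 ≤ s ≤ 0`, `0 ≤ r ≤ 1`, `|θ| ≤ k` in the polar variables `(s, r, θ)`. -/
def polarCylinder (k : ℝ) : Set (ℝ × ℝ × ℝ) :=
  Icc (-1) 0 ×ˢ Icc 0 1 ×ˢ Icc (-k) k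

/-- A solution `V` of the heat equation in polar coordinates on the unit cylinder that is
continuous up to the boundary and vanishes on the edges `|θ| = k` and at the vertex `r = 0`. -/
structure IsPolarCaloric (k : ℝ) (V : ℝ × ℝ × ℝ → ℝ) : Prop where
  continuousOn : ContinuousOn V (polarCylinder k)
  heat : ∀ s ∈ Ioc (-1) 0, ∀ r ∈ Ioo 0 1, ∀ θ ∈ Ioo (-k) k, HasPolarHeatAt V 0 s r θ
  lateral : ∀ s r θ, (s, r, θ) ∈ polarCylinder k → r = 0 ∨ |θ| = k → V (s, r, θ) = 0

namespace IsPolarCaloric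

variable {k : ℝ} {V F : ℝ × ℝ × ℝ → ℝ}

theorem neg (hV : IsPolarCaloric k V) : IsPolarCaloric k (fun p => -V p) where
  continuousOn := hV.continuousOn.neg
  heat s hs r hr θ hθ := by simpa using (hV.heat s hs r hr θ hθ).const_mul (-1)
  lateral s r θ hp h := by rw [hV.lateral s r θ hp h, neg_zero]

theorem le_of_supersolution (hV : IsPolarCaloric k V) (hF : ContinuousOn F (polarCylinder k))
    (hF_nonneg : ∀ p ∈ polarCylinder k, 0 ≤ F p)
    (hF_heat : ∀ s ∈ Ioc (-1) 0, ∀ r ∈ Ioo 0 1, ∀ θ ∈ Ioo (-k) k,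
      ∃ w > 0, HasPolarHeatAt F w s r θ)
    (hVF : ∀ s r θ, (s, r, θ) ∈ polarCylinder k → s = -1 ∨ r = 1 → V (s, r, θ) ≤ F (s, r, θ)) :
    ∀ p ∈ polarCylinder k, V p ≤ F p := by
  suffices ∀ p ∈ polarCylinder k, V p - F p ≤ 0 from fun p hp => sub_nonpos.1 (this p hp)
  refine nonpos_of_polarHeat_neg (hV.continuousOn.sub hF) ?_ fun s hs r hr θ hθ => ?_
  · rintro ⟨s, r, θ⟩ ⟨hp, hboundary⟩
    have hcyl : (s, r, θ) ∈ polarCylinder k := hp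
    obtain ⟨⟨hs₀, hs₁⟩, ⟨hr₀, hr₁⟩, hθ₀, hθ₁⟩ := hp
    by_cases hlateral : r = 0 ∨ |θ| = k
    · rw [hV.lateral s r θ hcyl hlateral]
      linarith [hF_nonneg _ hcyl]
    · push Not at hlateral
      have hθ : |θ| < k := (abs_le.2 ⟨hθ₀, hθ₁⟩).lt_of_ne hlateral.2
      refine sub_nonpos.2 (hVF s r θ hcyl ?_)
      by_contra! h
      exact hboundary ⟨⟨hs₀.lt_of_ne' h.1, hs₁⟩, ⟨hr₀.lt_of_ne' hlateral.1, hr₁.lt_of_ne h.2⟩,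
        abs_lt.1 hθ⟩
  · obtain ⟨w, hw, hFw⟩ := hF_heat s hs r hr θ hθ
    exact ⟨0 - w, by linarith, (hV.heat s hs r hr θ hθ).sub hFw⟩

theorem le_const_mul_wedgeBarrier {q p B μ C : ℝ} (hV : IsPolarCaloric k V)
    (hpar : IsBarrierParams k q p B μ) (hk : 0 ≤ k) (hC : 0 < C)
    (hVC : ∀ P ∈ polarCylinder k, V P ≤ C * (B ^ p * Real.cos (μ * k))) :
    ∀ P ∈ polarCylinder k, V P ≤ C * wedgeBarrier q p B μ P := by
  have hp : 0 ≤ p := by linarith [hpar.one_le_two_mul_p]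
  have hB : 0 ≤ B := hpar.B_pos.le
  have hcos : 0 < Real.cos (μ * k) := hpar.cos_pos hk
  refine hV.le_of_supersolution
    (continuous_const.mul (continuous_wedgeBarrier hpar.q_nonneg hp)).continuousOn ?_ ?_ ?_
  · rintro ⟨s, r, θ⟩ ⟨hs, hr, hθ⟩
    exact mul_nonneg hC.le
      (wedgeBarrier_nonneg hB hs.2 hr.1 (hcos.le.trans (hpar.cos_mul_le hθ)))
  · intro s hs r hr θ hθ
    obtain ⟨w, hw, hheat⟩ := wedgeBarrier_polarHeat_pos hpar.q_le_two hpar.one_le_two_mul_p hB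
      hpar.B_mul_p_lt hs.2 hr (hcos.trans_le (hpar.cos_mul_le (Ioo_subset_Icc_self hθ)))
    exact ⟨C * w, mul_pos hC hw, hheat.const_mul C⟩
  · intro s r θ hmem h
    obtain ⟨hs, hr, hθ⟩ := id hmem
    refine (hVC _ hmem).trans (mul_le_mul_of_nonneg_left ?_ hC.le)
    exact le_wedgeBarrier hp hB hpar.B_le_one hs.2 hr.1 hcos.le (hpar.cos_mul_le hθ) h

end IsPolarCaloric

theorem exists_forall_isPolarCaloric_abs_le {k lam : ℝ} (hk : 0 < k) (hlam : 0 < lam)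
    (hlamk : lam * k < Real.pi / 2) :
    ∃ K > 0, ∀ V S, IsPolarCaloric k V → (∀ p ∈ polarCylinder k, |V p| ≤ S) →
      ∀ r θ, (0, r, θ) ∈ polarCylinder k → |V (0, r, θ)| ≤ K * r ^ lam * S := by
  obtain ⟨q, p, B, μ, hpar, rfl⟩ := exists_isBarrierParams hk hlam hlamk
  have hB : 0 < B := hpar.B_pos
  have hcos : 0 < Real.cos (μ * k) := hpar.cos_pos hk.le
  set m := B ^ p * Real.cos (μ * k) with hm
  have hm0 : 0 < m := by positivity
  refine ⟨m⁻¹, inv_pos.2 hm0, fun V S hV hVS r θ hmem => ?_⟩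
  have hr : 0 ≤ r := hmem.2.1.1
  rcases ((abs_nonneg _).trans (hVS _ hmem)).eq_or_lt with rfl | hS
  · simpa using hVS _ hmem
  have hbound {W : ℝ × ℝ × ℝ → ℝ} (hW : IsPolarCaloric k W)
      (hWS : ∀ p ∈ polarCylinder k, W p ≤ S) : W (0, r, θ) ≤ m⁻¹ * r ^ (p * q) * S :=
    calc W (0, r, θ) ≤ S / m * wedgeBarrier q p B μ (0, r, θ) :=
          hW.le_const_mul_wedgeBarrier hpar hk.le (div_pos hS hm0)
            (by rwa [← hm, div_mul_cancel₀ S hm0.ne']) _ hmem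
      _ ≤ S / m * r ^ (p * q) := by gcongr; exact wedgeBarrier_zero_le hr
      _ = m⁻¹ * r ^ (p * q) * S := by ring
  refine abs_le'.2 ⟨hbound hV fun P hP => ?_, hbound hV.neg fun P hP => ?_⟩
  · exact (le_abs_self _).trans (hVS P hP)
  · exact (neg_le_abs _).trans (hVS P hP)

/-- The unit vector `(cos θ, sin θ)`; the point with polar coordinates `(r, θ)` is `r • unitVec θ`,
and `unitVec (θ + π / 2)` is the angular direction there. -/
noncomputable def unitVec (θ : ℝ) : EuclideanSpace ℝ (Fin 2) :=
  !₂[Real.cos θ, Real.sin θ]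

theorem norm_unitVec (θ : ℝ) : ‖unitVec θ‖ = 1 := by
  simp [unitVec, EuclideanSpace.norm_eq]

theorem norm_smul_unitVec {r : ℝ} (hr : 0 ≤ r) (θ : ℝ) : ‖r • unitVec θ‖ = r := by
  rw [norm_smul, norm_unitVec, mul_one, Real.norm_of_nonneg hr]

theorem unitVec_add_pi_div_two_add_pi_div_two (θ : ℝ) :
    unitVec (θ + Real.pi / 2 + Real.pi / 2) = -unitVec θ := by
  ext i
  fin_cases i <;> simp [unitVec, Real.cos_add_pi_div_two, Real.sin_add_pi_div_two]

theorem hasDerivAt_unitVec (θ : ℝ) : HasDerivAt unitVec (unitVec (θ + Real.pi / 2)) θ := by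
  have hcoord : HasDerivAt (fun θ => ![Real.cos θ, Real.sin θ])
      ![Real.cos (θ + Real.pi / 2), Real.sin (θ + Real.pi / 2)] θ := by
    rw [hasDerivAt_pi, Fin.forall_fin_two, Real.cos_add_pi_div_two, Real.sin_add_pi_div_two]
    exact ⟨Real.hasDerivAt_cos θ, Real.hasDerivAt_sin θ⟩
  exact (PiLp.continuousLinearEquiv 2 ℝ fun _ => ℝ).symm.hasFDerivAt.comp_hasDerivAt θ hcoord

theorem continuous_unitVec : Continuous unitVec :=
  continuous_iff_continuousAt.2 fun θ => (hasDerivAt_unitVec θ).continuousAt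

theorem continuous_smul_unitVec : Continuous fun p : ℝ × ℝ => p.1 • unitVec p.2 :=
  continuous_fst.smul (continuous_unitVec.comp continuous_snd)

theorem hasDerivTwiceAt_smul_unitVec_radial (r θ : ℝ) :
    HasDerivTwiceAt (· • unitVec θ) (fun _ => unitVec θ) 0 r :=
  ⟨.of_forall fun y => by simpa using (hasDerivAt_id y).smul_const (unitVec θ),
    hasDerivAt_const r _⟩

theorem hasDerivTwiceAt_smul_unitVec_angular (r θ : ℝ) :
    HasDerivTwiceAt (fun y => r • unitVec y) (fun y => r • unitVec (y + Real.pi / 2))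
      (-(r • unitVec θ)) θ := by
  refine ⟨.of_forall fun y => (hasDerivAt_unitVec y).const_smul r, ?_⟩
  rw [← smul_neg, ← unitVec_add_pi_div_two_add_pi_div_two]
  exact ((hasDerivAt_unitVec _).comp_add_const θ _).const_smul r

theorem sum_single_single_eq_unitVec
    (b : EuclideanSpace ℝ (Fin 2) →L[ℝ] EuclideanSpace ℝ (Fin 2) →L[ℝ] ℝ) (θ : ℝ) :
    ∑ i : Fin 2, b (EuclideanSpace.single i 1) (EuclideanSpace.single i 1) =
      b (unitVec θ) (unitVec θ) + b (unitVec (θ + Real.pi / 2)) (unitVec (θ + Real.pi / 2)) := by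
  have hexpand (η : ℝ) : unitVec η = Real.cos η • EuclideanSpace.single 0 1
      + Real.sin η • EuclideanSpace.single 1 1 := by
    ext i
    fin_cases i <;> simp [unitVec]
  simp only [hexpand, Real.cos_add_pi_div_two, Real.sin_add_pi_div_two, Fin.sum_univ_two, map_add,
    map_smul, add_apply, smul_apply, smul_eq_mul]
  linear_combination
    -(b (EuclideanSpace.single 0 1) (EuclideanSpace.single 0 1) +
      b (EuclideanSpace.single 1 1) (EuclideanSpace.single 1 1)) * Real.sin_sq_add_cos_sq θ

/-- `v` satisfies `∂ₜ v = Δₓ v` at `(t, x)`, where `v t` has a gradient on `A` that is itself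
differentiable at `x`. -/
def SolvesHeatAt (v : ℝ → EuclideanSpace ℝ (Fin 2) → ℝ) (A : Set (EuclideanSpace ℝ (Fin 2)))
    (t : ℝ) (x : EuclideanSpace ℝ (Fin 2)) : Prop :=
  ∃ vt : ℝ, HasDerivAt (fun s => v s x) vt t ∧
    ∃ g : EuclideanSpace ℝ (Fin 2) → (EuclideanSpace ℝ (Fin 2) →L[ℝ] ℝ),
      (∀ y ∈ A, HasFDerivAt (v t) (g y) y) ∧
      ∃ g' : EuclideanSpace ℝ (Fin 2) →L[ℝ] EuclideanSpace ℝ (Fin 2) →L[ℝ] ℝ,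
        HasFDerivAt g g' x ∧
        vt = ∑ i : Fin 2, g' (EuclideanSpace.single i 1) (EuclideanSpace.single i 1)

theorem SolvesHeatAt.hasPolarHeatAt {v : ℝ → EuclideanSpace ℝ (Fin 2) → ℝ}
    {A : Set (EuclideanSpace ℝ (Fin 2))} {s r θ : ℝ} (h : SolvesHeatAt v A s (r • unitVec θ))
    (hr : r ≠ 0) (hA : ∀ᶠ p in 𝓝 (r, θ), p.1 • unitVec p.2 ∈ A) :
    HasPolarHeatAt (fun p => v p.1 (p.2.1 • unitVec p.2.2)) 0 s r θ := by
  obtain ⟨vt, hvt, g, hg, g', hg', rfl⟩ := h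
  have hA_radial : ∀ᶠ r' in 𝓝 r, r' • unitVec θ ∈ A :=
    (Continuous.prodMk_left θ).continuousAt.eventually hA
  have hA_angular : ∀ᶠ θ' in 𝓝 θ, r • unitVec θ' ∈ A :=
    (Continuous.prodMk_right r).continuousAt.eventually hA
  refine ⟨_, _, _, _, _, hvt,
    (hasDerivTwiceAt_smul_unitVec_radial r θ).comp_hasFDerivAt (hA_radial.mono fun _ => hg _) hg',
    (hasDerivTwiceAt_smul_unitVec_angular r θ).comp_hasFDerivAt (hA_angular.mono fun _ => hg _)
      hg', ?_⟩
  rw [sum_single_single_eq_unitVec g' θ]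
  simp only [map_smul, map_neg, map_zero, smul_apply, smul_eq_mul]
  field_simp
  ring

section wedge

variable {κ r θ : ℝ}

theorem mem_wedge_iff {x : EuclideanSpace ℝ (Fin 2)} :
    x ∈ wedge κ ↔ ∃ r : ℝ, 0 < r ∧ ∃ θ ∈ Ioo (-(κ / 2)) (κ / 2), x = r • unitVec θ := by
  have hcoord (r η : ℝ) :
      x = r • unitVec η ↔ x 0 = r * Real.cos η ∧ x 1 = r * Real.sin η := by
    simp [PiLp.ext_iff, unitVec]
  constructor
  · rintro ⟨r, η, hr, hη₀, hη₁, hx⟩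
    exact ⟨r, hr, η, ⟨hη₀, hη₁⟩, (hcoord r η).2 hx⟩
  · rintro ⟨r, hr, η, hη, hx⟩
    exact ⟨r, η, hr, hη.1, hη.2, (hcoord r η).1 hx⟩

theorem smul_unitVec_mem_wedge (hr : 0 < r) (hθ : θ ∈ Ioo (-(κ / 2)) (κ / 2)) :
    r • unitVec θ ∈ wedge κ :=
  mem_wedge_iff.2 ⟨r, hr, θ, hθ, rfl⟩

theorem smul_unitVec_mem_closure_wedge (hκ : 0 < κ) (hr : 0 ≤ r)
    (hθ : θ ∈ Icc (-(κ / 2)) (κ / 2)) : r • unitVec θ ∈ closure (wedge κ) := by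
  have hmaps : MapsTo (fun p : ℝ × ℝ => p.1 • unitVec p.2)
      (Ioi 0 ×ˢ Ioo (-(κ / 2)) (κ / 2)) (wedge κ) :=
    fun p hp => smul_unitVec_mem_wedge hp.1 hp.2
  have hclosure := hmaps.closure continuous_smul_unitVec
  rw [closure_prod_eq, closure_Ioi, closure_Ioo (by linarith)] at hclosure
  exact hclosure (⟨hr, hθ⟩ : (r, θ) ∈ Ici 0 ×ˢ Icc (-(κ / 2)) (κ / 2))

theorem smul_unitVec_notMem_wedge (hκ : κ ≤ 2 * Real.pi) (hr : 0 ≤ r)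
    (h : r = 0 ∨ |θ| = κ / 2) : r • unitVec θ ∉ wedge κ := by
  rw [mem_wedge_iff]
  rintro ⟨b, hb, η, hη, heq⟩
  have hrb : r = b := by
    rw [← norm_smul_unitVec hr θ, heq, norm_smul_unitVec hb.le]
  subst hrb
  have hcos : Real.cos |θ| = Real.cos |η| := by
    rw [Real.cos_abs, Real.cos_abs]
    exact congrArg (fun x => x 0) (smul_right_injective _ hb.ne' heq)
  have hθ : |θ| = κ / 2 := h.resolve_left hb.ne'
  have hη' : |η| < κ / 2 := abs_lt.2 hη
  have := Real.injOn_cos ⟨abs_nonneg θ, by linarith⟩ ⟨abs_nonneg η, by linarith⟩ hcos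
  linarith

theorem smul_unitVec_mem_frontier_wedge (hκ0 : 0 < κ) (hκ : κ ≤ 2 * Real.pi) (hr : 0 ≤ r)
    (hθ : θ ∈ Icc (-(κ / 2)) (κ / 2)) (h : r = 0 ∨ |θ| = κ / 2) :
    r • unitVec θ ∈ frontier (wedge κ) :=
  ⟨smul_unitVec_mem_closure_wedge hκ0 hr hθ,
    fun hint => smul_unitVec_notMem_wedge hκ hr h (interior_subset hint)⟩

end wedge

/-- `v` is continuous up to the boundary and caloric on `wedge κ ∩ B_R` for times in `I`, and
vanishes on the part of the boundary of the wedge inside `B_R`. -/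
structure IsWedgeCaloric (κ R : ℝ) (I : Set ℝ) (v : ℝ → EuclideanSpace ℝ (Fin 2) → ℝ) : Prop where
  continuousOn : ContinuousOn (fun q : ℝ × EuclideanSpace ℝ (Fin 2) => v q.1 q.2)
    (I ×ˢ (closure (wedge κ) ∩ Metric.ball 0 R))
  heat : ∀ t ∈ I, ∀ x ∈ wedge κ ∩ Metric.ball 0 R, SolvesHeatAt v (wedge κ ∩ Metric.ball 0 R) t x
  lateral : ∀ t ∈ I, ∀ x ∈ frontier (wedge κ) ∩ Metric.ball 0 R, v t x = 0

/-- `v` in polar coordinates, parabolically rescaled so that the cylinder of radius `ρ` with final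
time `t` becomes the unit cylinder. -/
noncomputable def polarPullback (ρ t : ℝ) (v : ℝ → EuclideanSpace ℝ (Fin 2) → ℝ)
    (p : ℝ × ℝ × ℝ) : ℝ :=
  v (t + ρ ^ 2 * p.1) ((ρ * p.2.1) • unitVec p.2.2)

section polarPullback

variable {κ ρ R t : ℝ} {I : Set ℝ} {v : ℝ → EuclideanSpace ℝ (Fin 2) → ℝ}

theorem smul_unitVec_mem_ball (hρ : 0 ≤ ρ) (hρR : ρ < R) {r : ℝ} (hr : r ∈ Icc 0 1) (θ : ℝ) :
    (ρ * r) • unitVec θ ∈ Metric.ball 0 R := by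
  rw [mem_ball_zero_iff, norm_smul_unitVec (mul_nonneg hρ hr.1)]
  exact (mul_le_of_le_one_right hρ hr.2).trans_lt hρR

theorem hasPolarHeatAt_polarPullback (hρ : 0 < ρ) (hρR : ρ < R)
    (hv : ∀ t ∈ I, ∀ x ∈ wedge κ ∩ Metric.ball 0 R,
      SolvesHeatAt v (wedge κ ∩ Metric.ball 0 R) t x)
    {s r θ : ℝ} (hs : t + ρ ^ 2 * s ∈ I) (hr : r ∈ Ioo 0 1)
    (hθ : θ ∈ Ioo (-(κ / 2)) (κ / 2)) : HasPolarHeatAt (polarPullback ρ t v) 0 s r θ := by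
  have hmem {r' θ' : ℝ} (hr' : r' ∈ Ioo 0 R) (hθ' : θ' ∈ Ioo (-(κ / 2)) (κ / 2)) :
      r' • unitVec θ' ∈ wedge κ ∩ Metric.ball 0 R :=
    ⟨smul_unitVec_mem_wedge hr'.1 hθ', by
      rw [mem_ball_zero_iff, norm_smul_unitVec hr'.1.le]; exact hr'.2⟩
  have hρr : ρ * r ∈ Ioo 0 R :=
    ⟨mul_pos hρ hr.1, (mul_le_of_le_one_right hρ.le hr.2.le).trans_lt hρR⟩
  have hnhds : ∀ᶠ p in 𝓝 (ρ * r, θ), p.1 • unitVec p.2 ∈ wedge κ ∩ Metric.ball 0 R :=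
    mem_of_superset (prod_mem_nhds (Ioo_mem_nhds hρr.1 hρr.2) (Ioo_mem_nhds hθ.1 hθ.2))
      fun p hp => hmem hp.1 hp.2
  have hheat := (hv _ hs _ (hmem hρr hθ)).hasPolarHeatAt hρr.1.ne' hnhds
  have hrescaled := hheat.parabolic_rescale hρ.ne'
  rwa [mul_zero] at hrescaled

theorem IsWedgeCaloric.isPolarCaloric_polarPullback (hv : IsWedgeCaloric κ R I v)
    (hκ0 : 0 < κ) (hκ : κ ≤ 2 * Real.pi) (hρ : 0 < ρ) (hρR : ρ < R)
    (hI : ∀ s ∈ Icc (-1) 0, t + ρ ^ 2 * s ∈ I) :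
    IsPolarCaloric (κ / 2) (polarPullback ρ t v) where
  continuousOn := by
    have hchange : Continuous fun p : ℝ × ℝ × ℝ =>
        (t + ρ ^ 2 * p.1, (ρ * p.2.1) • unitVec p.2.2) :=
      Continuous.prodMk (by fun_prop)
        (continuous_smul_unitVec.comp (g := fun p : ℝ × ℝ => p.1 • unitVec p.2)
          (f := fun p : ℝ × ℝ × ℝ => (ρ * p.2.1, p.2.2)) (by fun_prop))
    refine hv.continuousOn.comp hchange.continuousOn fun p ⟨hs, hr, hθ⟩ => ⟨hI _ hs, ?_, ?_⟩
    · exact smul_unitVec_mem_closure_wedge hκ0 (mul_nonneg hρ.le hr.1) hθ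
    · exact smul_unitVec_mem_ball hρ.le hρR hr _
  heat s hs r hr θ hθ :=
    hasPolarHeatAt_polarPullback hρ hρR hv.heat (hI s (Ioc_subset_Icc_self hs)) hr hθ
  lateral s r θ := by
    rintro ⟨hs, hr, hθ⟩ h
    refine hv.lateral _ (hI s hs) _ ⟨?_, smul_unitVec_mem_ball hρ.le hρR hr θ⟩
    exact smul_unitVec_mem_frontier_wedge hκ0 hκ (mul_nonneg hρ.le hr.1) hθ
      (h.imp_left fun h0 => by rw [h0, mul_zero])

theorem IsPolarCaloric.abs_polarPullback_le {S : ℝ}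
    (hV : IsPolarCaloric (κ / 2) (polarPullback ρ t v)) (hS : 0 ≤ S) (hρ : 0 < ρ) (hρR : ρ < R)
    (hI : ∀ s ∈ Icc (-1) 0, t + ρ ^ 2 * s ∈ I)
    (hvS : ∀ s ∈ I, ∀ y ∈ wedge κ ∩ Metric.ball 0 R, |v s y| ≤ S) :
    ∀ p ∈ polarCylinder (κ / 2), |polarPullback ρ t v p| ≤ S := by
  rintro ⟨s, r, θ⟩ hp
  by_cases hlateral : r = 0 ∨ |θ| = κ / 2
  · rw [hV.lateral s r θ hp hlateral, abs_zero]
    exact hS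
  · push Not at hlateral
    obtain ⟨hs, hr, hθ⟩ := hp
    have hθ' : |θ| < κ / 2 := (abs_le.2 hθ).lt_of_ne hlateral.2
    exact hvS _ (hI s hs) _ ⟨smul_unitVec_mem_wedge (mul_pos hρ (hr.1.lt_of_ne' hlateral.1))
      (abs_lt.1 hθ'), smul_unitVec_mem_ball hρ.le hρR hr θ⟩

end polarPullback

theorem stmt_12_general {κ lam : ℝ} (hκ0 : 0 < κ) (hκ : κ ≤ 2 * Real.pi) (hlam0 : 0 < lam)
    (hlam : lam < Real.pi / κ) :
    ∃ K₀ : ℝ, 0 < K₀ ∧ ∀ (R t₀ : ℝ), 0 < R → ∀ v : ℝ → EuclideanSpace ℝ (Fin 2) → ℝ,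
      IsWedgeCaloric κ R (Ioc (t₀ - R ^ 2) t₀) v →
      ∀ t ∈ Ioc (t₀ - R ^ 2 / 4) t₀, ∀ x ∈ wedge κ ∩ Metric.ball 0 (R / 2), ∀ S : ℝ,
        (∀ s ∈ Ioc (t₀ - 9 * R ^ 2 / 16) t₀,
          ∀ y ∈ wedge κ ∩ Metric.ball 0 (3 * R / 4), |v s y| ≤ S) →
        |v t x| ≤ K₀ * (‖x‖ / R) ^ lam * S := by
  have hlamκ : lam * (κ / 2) < Real.pi / 2 := by linarith [(lt_div_iff₀ hκ0).1 hlam]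
  obtain ⟨K, hK, hdecay⟩ := exists_forall_isPolarCaloric_abs_le (half_pos hκ0) hlam0 hlamκ
  refine ⟨K * 2 ^ lam, by positivity, fun R t₀ hR v hv t ht x hx S hS => ?_⟩
  obtain ⟨⟨r, hr0, θ, hθ, rfl⟩, hrR⟩ := hx.imp_left mem_wedge_iff.1
  rw [mem_ball_zero_iff, norm_smul_unitVec hr0.le] at hrR
  have htime {a : ℝ} (ha : R ^ 2 / 2 ≤ a) (s : ℝ) (hs : s ∈ Icc (-1) 0) :
      t + (R / 2) ^ 2 * s ∈ Ioc (t₀ - a) t₀ :=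
    ⟨by nlinarith [hs.1, ht.1], by nlinarith [hs.2, ht.2]⟩
  have hV : IsPolarCaloric (κ / 2) (polarPullback (R / 2) t v) :=
    hv.isPolarCaloric_polarPullback hκ0 hκ (half_pos hR) (half_lt_self hR)
      (htime (by nlinarith))
  have hS0 : 0 ≤ S := (abs_nonneg _).trans
    (hS t ⟨by nlinarith [ht.1], ht.2⟩ _ ⟨hx.1, Metric.ball_subset_ball (by linarith) hx.2⟩)
  have hVS := hV.abs_polarPullback_le hS0 (half_pos hR) (by linarith) (htime (by nlinarith)) hS
  have hmem : (0, r / (R / 2), θ) ∈ polarCylinder (κ / 2) :=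
    ⟨by simp, ⟨by positivity, (div_le_one (half_pos hR)).2 hrR.le⟩, Ioo_subset_Icc_self hθ⟩
  calc |v t (r • unitVec θ)| = |polarPullback (R / 2) t v (0, r / (R / 2), θ)| := by
        rw [polarPullback, mul_zero, add_zero, mul_div_cancel₀ r (half_pos hR).ne']
    _ ≤ K * (r / (R / 2)) ^ lam * S := hdecay _ S hV hVS _ θ hmem
    _ = K * 2 ^ lam * (‖r • unitVec θ‖ / R) ^ lam * S := by
        rw [norm_smul_unitVec hr0.le, div_div_eq_mul_div, mul_comm r, mul_div_assoc,
          Real.mul_rpow two_pos.le (by positivity), ← mul_assoc]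

/-- **boundary decay of caloric functions on planar wedges.**
Let `κ ∈ (0, 2π)`, `D = D^(κ)` and `0 < λ < π/κ`. Then there is `K₀ = K₀(κ, λ) > 0` such
that for every `R > 0`, `t₀ ∈ ℝ` and `v` satisfying: (a) `v` is continuous on
`(t₀−R², t₀] × (cl D ∩ B_R)`; (b) on `(t₀−R², t₀] × (D ∩ B_R)` the time derivative and
spatial second derivatives of `v` exist and `∂ₜ v = Δₓ v`; (c) `v = 0` on
`(t₀−R², t₀] × (∂D ∩ B_R)`; (d) for every `r ∈ (0,R)`,
`sup_{t ∈ (t₀−r², t₀]} ∫_{D∩B_r} v² dx < ∞` and `∫∫ |∇ₓ v|² < ∞`; it holds that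
`|v(t,x)| ≤ K₀ (|x|/R)^λ sup_{(t₀−9R²/16, t₀] × (D ∩ B_{3R/4})} |v|` for all
`(t,x) ∈ (t₀−R²/4, t₀] × (D ∩ B_{R/2})` (the supremum being encoded via an arbitrary
upper bound `S`, so that an infinite supremum makes the claim trivial). -/
theorem stmt_12 (κ : ℝ) (hκ0 : 0 < κ) (hκ2 : κ < 2 * Real.pi)
    (lam : ℝ) (hlam0 : 0 < lam) (hlam : lam < Real.pi / κ) :
    ∃ K₀ : ℝ, 0 < K₀ ∧
      ∀ (R t₀ : ℝ), 0 < R → ∀ v : ℝ → EuclideanSpace ℝ (Fin 2) → ℝ,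
        -- (a) continuity
        ContinuousOn (fun q : ℝ × EuclideanSpace ℝ (Fin 2) => v q.1 q.2)
          (Set.Ioc (t₀ - R ^ 2) t₀ ×ˢ (closure (wedge κ) ∩ Metric.ball 0 R)) →
        -- (b) the heat equation `∂ₜ v = Δₓ v` pointwise in `(t₀−R², t₀] × (D ∩ B_R)`
        (∀ t ∈ Set.Ioc (t₀ - R ^ 2) t₀, ∀ x ∈ wedge κ ∩ Metric.ball 0 R,
          ∃ vt : ℝ, HasDerivAt (fun s => v s x) vt t ∧
            ∃ g : EuclideanSpace ℝ (Fin 2) → (EuclideanSpace ℝ (Fin 2) →L[ℝ] ℝ),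
              (∀ y ∈ wedge κ ∩ Metric.ball 0 R, HasFDerivAt (v t) (g y) y) ∧
              ∃ g' : EuclideanSpace ℝ (Fin 2) →L[ℝ] EuclideanSpace ℝ (Fin 2) →L[ℝ] ℝ,
                HasFDerivAt g g' x ∧
                vt = ∑ i : Fin 2,
                  g' (EuclideanSpace.single i 1) (EuclideanSpace.single i 1)) →
        -- (c) vanishing on the lateral boundary
        (∀ t ∈ Set.Ioc (t₀ - R ^ 2) t₀, ∀ x ∈ frontier (wedge κ) ∩ Metric.ball 0 R,
          v t x = 0) →
        -- (d) local energy finiteness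
        (∀ r : ℝ, 0 < r → r < R →
          (∃ Cr : ℝ, ∀ t ∈ Set.Ioc (t₀ - r ^ 2) t₀,
            (∫⁻ x in wedge κ ∩ Metric.ball 0 r, ENNReal.ofReal (v t x ^ 2)) ≤
              ENNReal.ofReal Cr) ∧
          (∫⁻ t in Set.Ioc (t₀ - r ^ 2) t₀, ∫⁻ x in wedge κ ∩ Metric.ball 0 r,
              ENNReal.ofReal (‖fderiv ℝ (v t) x‖ ^ 2)) < ⊤) →
        -- conclusion
        ∀ t ∈ Set.Ioc (t₀ - R ^ 2 / 4) t₀, ∀ x ∈ wedge κ ∩ Metric.ball 0 (R / 2),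
          ∀ S : ℝ,
            (∀ s ∈ Set.Ioc (t₀ - 9 * R ^ 2 / 16) t₀,
              ∀ y ∈ wedge κ ∩ Metric.ball 0 (3 * R / 4), |v s y| ≤ S) →
            |v t x| ≤ K₀ * (‖x‖ / R) ^ lam * S := by
  obtain ⟨K₀, hK₀, hdecay⟩ := stmt_12_general hκ0 hκ2.le hlam0 hlam
  exact ⟨K₀, hK₀, fun R t₀ hR v ha hb hc _ => hdecay R t₀ hR v ⟨ha, hb, hc⟩⟩
end
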